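/- Let n ≥ 1, let b ≥ 1 be an integer, and let α ∈ (1/2, 1] satisfy 2α < n and nb > 2α(b+1). Let p(·) ∈ P^log(ℝ^n) with p⁻ > b+1 and 2α·p⁺ < n(b+1). Then there exists C > 0 such that for every measurable 𝓕 : (0,∞)×ℝ^n → ℝ: N_{p(·), nb/(2α)}( (t,x) ↦ ∫_0^t (𝔤_{t−s}^α ∗ 𝓕(s,·))(x) ds ) ≤ C · N_{p(·)/(b+1), nb/((b+1)·2α)}(𝓕). -/

import Mathlib

open MeasureTheory Set
open scoped ENNReal FourierTransform

noncomputable section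

/-- Euclidean space `ℝ^n`. -/
abbrev Rn (n : ℕ) := EuclideanSpace ℝ (Fin n)

/-- Luxemburg norm of an `ℝ≥0∞`-valued function for a variable exponent `p`. -/
def luxNorm {Ω : Type*} [MeasurableSpace Ω] (μ : Measure Ω) (p : Ω → ℝ) (f : Ω → ℝ≥0∞) : ℝ≥0∞ :=
  sInf {lam : ℝ≥0∞ | 0 < lam ∧ ∫⁻ x, (f x / lam) ^ (p x) ∂μ ≤ 1}

/-- Luxemburg norm `‖f‖_{L^{p(·)}}` of a real-valued function. -/
def luxNormR {Ω : Type*} [MeasurableSpace Ω] (μ : Measure Ω) (p : Ω → ℝ) (f : Ω → ℝ) : ℝ≥0∞ :=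
  luxNorm μ p (fun x => ENNReal.ofReal |f x|)

/-- `p(·) ∈ P^log(Ω)`: measurable, with values in `[1,∞)` on `Ω`, locally log-Hölder
continuous on `Ω`, and satisfying the log-Hölder decay condition on `Ω`. -/
def IsPLog {E : Type*} [NormedAddCommGroup E] [MeasurableSpace E] (Ω : Set E) (p : E → ℝ) : Prop :=
  Measurable p ∧ (∀ x ∈ Ω, 1 ≤ p x) ∧
  ∃ C₁ > (0:ℝ), ∃ C₂ > (0:ℝ), ∃ pinf : ℝ,
    (∀ x ∈ Ω, ∀ y ∈ Ω, x ≠ y →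
      |1 / p x - 1 / p y| ≤ C₁ / Real.log (Real.exp 1 + 1 / ‖x - y‖)) ∧
    (∀ x ∈ Ω, |1 / p x - 1 / pinf| ≤ C₂ / Real.log (Real.exp 1 + ‖x‖))

/-- The fractional heat kernel `𝔤_t^α` on `ℝ^n`: the inverse Fourier transform of
`ξ ↦ exp (-t‖ξ‖^{2α})` (it is real-valued; we take the real part). -/
def gKer (n : ℕ) (α t : ℝ) (x : Rn n) : ℝ :=
  (𝓕⁻ (fun ξ : Rn n => (Real.exp (-t * ‖ξ‖ ^ (2 * α)) : ℂ)) x).re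

/-- Convolution on `ℝ^n`. -/
def conv (n : ℕ) (g f : Rn n → ℝ) (x : Rn n) : ℝ := ∫ y, g (x - y) * f y

/-- `x ↦ ess sup_{t>0} |u(t,x)|`, as an `ℝ≥0∞`-valued function. -/
def timeSup (n : ℕ) (u : ℝ → Rn n → ℝ) (x : Rn n) : ℝ≥0∞ :=
  essSup (fun t => ENNReal.ofReal |u t x|) (volume.restrict (Ioi (0:ℝ)))

/-- Mixed norm `‖f‖_{𝓛^{p(·)}_r} = max {‖f‖_{L^{p(·)}}, ‖f‖_{L^r}}`. -/
def mixedNorm (n : ℕ) (p : Rn n → ℝ) (r : ℝ) (f : Rn n → ℝ) : ℝ≥0∞ :=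
  max (luxNormR volume p f) (luxNormR volume (fun _ => r) f)

/-- `N_{p(·),r}(u) = ‖x ↦ ess sup_{t>0}|u(t,x)|‖_{𝓛^{p(·)}_r}`. -/
def mixedN (n : ℕ) (p : Rn n → ℝ) (r : ℝ) (u : ℝ → Rn n → ℝ) : ℝ≥0∞ :=
  max (luxNorm volume p (timeSup n u)) (luxNorm volume (fun _ => r) (timeSup n u))

/-- The cosine transform of a real symbol on `ℝ^n`. -/
def cosTransform (n : ℕ) (σ : Rn n → ℝ) (x : Rn n) : ℝ :=
  ∫ ξ, σ ξ * Real.cos (2 * Real.pi * inner ℝ ξ x)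

lemma re_fourierInv_ofReal (n : ℕ) {σ : Rn n → ℝ} (hσ : Integrable σ) (x : Rn n) :
    (𝓕⁻ (fun ξ => (σ ξ : ℂ)) x).re = cosTransform n σ x := by
  rw [Real.fourierInv_eq', cosTransform]
  have hi : Integrable (fun v : Rn n =>
      Complex.exp (↑(2 * Real.pi * inner ℝ v x) * Complex.I) • (σ v : ℂ)) := by
    refine (hσ.ofReal (𝕜 := ℂ)).mono ?_ ?_
    · simp only [smul_eq_mul]
      refine AEStronglyMeasurable.mul ?_ (hσ.ofReal (𝕜 := ℂ)).1
      exact (by fun_prop : Continuous fun v : Rn n =>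
        Complex.exp (↑(2 * Real.pi * inner ℝ v x) * Complex.I)).aestronglyMeasurable
    · filter_upwards with v
      rw [norm_smul, Complex.norm_exp_ofReal_mul_I, one_mul]
      rfl
  have h := Complex.reCLM.integral_comp_comm hi
  simp only [Complex.reCLM_apply] at h
  rw [← h]
  congr 1
  ext v
  rw [smul_eq_mul, mul_comm, Complex.re_ofReal_mul, Complex.exp_ofReal_mul_I_re]

lemma integrable_mul_cos (n : ℕ) {σ : Rn n → ℝ} (hσ : Integrable σ) (x : Rn n) :
    Integrable (fun ξ => σ ξ * Real.cos (2 * Real.pi * inner ℝ ξ x)) := by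
  refine hσ.mono (hσ.1.mul (by fun_prop : Continuous fun ξ : Rn n =>
    Real.cos (2 * Real.pi * inner ℝ ξ x)).aestronglyMeasurable) ?_
  filter_upwards with v
  rw [norm_mul]
  exact mul_le_of_le_one_right (norm_nonneg _) (Real.abs_cos_le_one _)

lemma rpow_half_mul_exp_neg_le (n : ℕ) {u : ℝ} (hu : 0 ≤ u) :
    u ^ ((n:ℝ) / 2) * Real.exp (-u) ≤ n.factorial := by
  have hf : (1:ℝ) ≤ n.factorial := by exact_mod_cast n.factorial_pos
  rw [Real.exp_neg, ← div_eq_mul_inv, div_le_iff₀ (Real.exp_pos u)]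
  rcases le_total u 1 with h | h
  · calc u ^ ((n:ℝ) / 2) ≤ 1 := Real.rpow_le_one hu h (by positivity)
      _ ≤ n.factorial * Real.exp u := one_le_mul_of_one_le_of_one_le hf (Real.one_le_exp hu)
  · calc u ^ ((n:ℝ) / 2) ≤ u ^ (n:ℝ) :=
          Real.rpow_le_rpow_of_exponent_le h (by linarith [Nat.cast_nonneg (α := ℝ) n])
      _ = u ^ n := Real.rpow_natCast u n
      _ ≤ n.factorial * Real.exp u := by
          have := Real.pow_div_factorial_le_exp u hu n
          rwa [div_le_iff₀' (by positivity)] at this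

lemma integrable_exp_neg_mul_norm_rpow (n : ℕ) (hn : 1 ≤ n) {b q : ℝ} (hb : 0 < b) (hq : 0 < q) :
    Integrable (fun ξ : Rn n => Real.exp (-b * ‖ξ‖ ^ q)) := by
  have : Nontrivial (Rn n) := by
    have : Nonempty (Fin n) := ⟨⟨0, hn⟩⟩
    infer_instance
  rw [integrable_fun_norm_addHaar (volume : Measure (Rn n)) (f := fun y => Real.exp (-b * y ^ q))]
  have := integrableOn_rpow_mul_exp_neg_mul_rpow (s := ((n - 1 : ℕ) : ℝ)) (p := q) (b := b)
    (by linarith [Nat.cast_nonneg (α := ℝ) (n-1)]) hq hb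
  simpa [Real.rpow_natCast] using this

lemma integrable_exp_neg_mul_norm_sq (n : ℕ) (hn : 1 ≤ n) {b : ℝ} (hb : 0 < b) :
    Integrable (fun ξ : Rn n => Real.exp (-b * ‖ξ‖ ^ 2)) := by
  have := integrable_exp_neg_mul_norm_rpow n hn hb (q := 2) two_pos
  simpa using this

lemma cosTransform_gaussian (n : ℕ) (hn : 1 ≤ n) {b : ℝ} (hb : 0 < b) (x : Rn n) :
    cosTransform n (fun ξ => Real.exp (-b * ‖ξ‖ ^ 2)) x
      = (Real.pi / b) ^ ((n:ℝ) / 2) * Real.exp (-(Real.pi ^ 2 * ‖x‖ ^ 2 / b)) := by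
  rw [← re_fourierInv_ofReal n (integrable_exp_neg_mul_norm_sq n hn hb), Real.fourierInv_eq_fourier_neg]
  have h := fourier_gaussian_innerProductSpace (b := (b:ℂ)) (V := Rn n) (by simpa using hb) (-x)
  have e : (fun ξ : Rn n => ((Real.exp (-b * ‖ξ‖ ^ 2) : ℝ) : ℂ))
      = fun v => Complex.exp (-(b:ℂ) * (‖v‖:ℂ) ^ 2) := by
    ext v; push_cast; rfl
  rw [e, h]
  have e2 : ((Real.pi : ℂ) / b) ^ (((Module.finrank ℝ (Rn n) : ℕ) : ℂ) / 2) *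
      Complex.exp (-(Real.pi:ℂ) ^ 2 * (‖-x‖ : ℂ) ^ 2 / b)
      = (((Real.pi / b) ^ ((n:ℝ) / 2) * Real.exp (-(Real.pi ^ 2 * ‖x‖ ^ 2 / b)) : ℝ) : ℂ) := by
    rw [finrank_euclideanSpace_fin]
    push_cast
    rw [Complex.ofReal_cpow (by positivity)]
    push_cast
    rw [norm_neg]
    congr 2
    ring
  rw [e2, Complex.ofReal_re]

lemma cosTransform_gaussian_mul_le (n : ℕ) (hn : 1 ≤ n) {b : ℝ} (hb : 0 < b) (x : Rn n) :
    cosTransform n (fun ξ => Real.exp (-b * ‖ξ‖ ^ 2)) x * ‖x‖ ^ n ≤ n.factorial := by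
  rw [cosTransform_gaussian n hn hb]
  have hu : 0 ≤ Real.pi ^ 2 * ‖x‖ ^ 2 / b := by positivity
  refine le_trans ?_ (rpow_half_mul_exp_neg_le n hu)
  have e : Real.pi ^ 2 * ‖x‖ ^ 2 / b = (Real.pi / b) * Real.pi * ‖x‖ ^ 2 := by ring
  have e3 : (Real.pi ^ 2 * ‖x‖ ^ 2 / b) ^ ((n:ℝ) / 2)
      = (Real.pi / b) ^ ((n:ℝ) / 2) * Real.pi ^ ((n:ℝ)/2) * ‖x‖ ^ n := by
    rw [e, Real.mul_rpow (by positivity) (by positivity), Real.mul_rpow (by positivity) (by positivity),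
      ← Real.rpow_natCast (‖x‖) 2, ← Real.rpow_mul (norm_nonneg _), ← Real.rpow_natCast]
    congr 2
    push_cast; ring
  rw [e3]
  have h1 : (1:ℝ) ≤ Real.pi ^ ((n:ℝ)/2) :=
    Real.one_le_rpow (by linarith [Real.pi_gt_three]) (by positivity)
  have h2 : 0 ≤ (Real.pi / b) ^ ((n:ℝ) / 2) * ‖x‖ ^ n * Real.exp (-(Real.pi ^ 2 * ‖x‖ ^ 2 / b)) := by
    positivity
  nlinarith

/-- Radial symbols all of whose Gaussian regularizations have a nonnegative cosine transform
bounded by a fixed multiple of `‖x‖^{-n}`. -/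
structure GaussDominated (n : ℕ) (φ : ℝ → ℝ) : Prop where
  meas : Measurable φ
  bound : ∀ r, 0 ≤ r → |φ r| ≤ 1
  nonneg : ∀ δ > 0, ∀ x,
    0 ≤ cosTransform n (fun ξ => φ (‖ξ‖ ^ 2) * Real.exp (-δ * ‖ξ‖ ^ 2)) x
  le : ∀ δ > 0, ∀ x,
    cosTransform n (fun ξ => φ (‖ξ‖ ^ 2) * Real.exp (-δ * ‖ξ‖ ^ 2)) x * ‖x‖ ^ n ≤ n.factorial

lemma gaussDominated_one (n : ℕ) (hn : 1 ≤ n) : GaussDominated n (fun _ => 1) where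
  meas := measurable_const
  bound := by simp
  nonneg δ hδ x := by
    simp only [one_mul]
    rw [cosTransform_gaussian n hn hδ]
    positivity
  le δ hδ x := by
    simp only [one_mul]
    exact cosTransform_gaussian_mul_le n hn hδ x

lemma GaussDominated.integrable {n : ℕ} (hn : 1 ≤ n) {φ : ℝ → ℝ} (h : GaussDominated n φ)
    {δ : ℝ} (hδ : 0 < δ) : Integrable (fun ξ : Rn n => φ (‖ξ‖ ^ 2) * Real.exp (-δ * ‖ξ‖ ^ 2)) := by
  refine (integrable_exp_neg_mul_norm_sq n hn hδ).mono ?_ ?_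
  · have := h.meas
    exact (by fun_prop : Measurable (fun ξ : Rn n => φ (‖ξ‖ ^ 2) * Real.exp (-δ * ‖ξ‖ ^ 2))).aestronglyMeasurable
  · filter_upwards with v
    rw [norm_mul]
    exact mul_le_of_le_one_left (norm_nonneg _) (h.bound _ (by positivity))

lemma tendsto_cosTransform (n : ℕ) {σ : ℕ → Rn n → ℝ} {τ g : Rn n → ℝ} (hg : Integrable g)
    (hm : ∀ k, AEStronglyMeasurable (σ k) volume) (hb : ∀ᶠ k in Filter.atTop, ∀ ξ, |σ k ξ| ≤ g ξ)
    (hl : ∀ ξ, Filter.Tendsto (fun k => σ k ξ) Filter.atTop (nhds (τ ξ))) (x : Rn n) :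
    Filter.Tendsto (fun k => cosTransform n (σ k) x) Filter.atTop (nhds (cosTransform n τ x)) := by
  refine tendsto_integral_filter_of_dominated_convergence g ?_ ?_ hg ?_
  · filter_upwards with k
    exact (hm k).mul (by fun_prop : Continuous fun ξ : Rn n =>
      Real.cos (2 * Real.pi * inner ℝ ξ x)).aestronglyMeasurable
  · filter_upwards [hb] with k hk
    filter_upwards with ξ
    rw [norm_mul]
    exact (mul_le_of_le_one_right (norm_nonneg _) (Real.abs_cos_le_one _)).trans (hk ξ)
  · filter_upwards with ξ
    exact (hl ξ).mul_const _

lemma GaussDominated.of_tendsto {n : ℕ} (hn : 1 ≤ n) {φ : ℕ → ℝ → ℝ} {ψ : ℝ → ℝ}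
    (hφ : ∀ᶠ k in Filter.atTop, GaussDominated n (φ k)) (hm : ∀ k, Measurable (φ k))
    (hψ : Measurable ψ)
    (hl : ∀ r, 0 ≤ r → Filter.Tendsto (fun k => φ k r) Filter.atTop (nhds (ψ r))) :
    GaussDominated n ψ := by
  have key : ∀ δ > 0, ∀ x : Rn n, Filter.Tendsto
      (fun k => cosTransform n (fun ξ => φ k (‖ξ‖ ^ 2) * Real.exp (-δ * ‖ξ‖ ^ 2)) x) Filter.atTop
      (nhds (cosTransform n (fun ξ => ψ (‖ξ‖ ^ 2) * Real.exp (-δ * ‖ξ‖ ^ 2)) x)) := by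
    intro δ hδ x
    refine tendsto_cosTransform n (integrable_exp_neg_mul_norm_sq n hn hδ) ?_ ?_ ?_ x
    · intro k
      have := hm k
      exact (by fun_prop : Measurable _).aestronglyMeasurable
    · filter_upwards [hφ] with k hk ξ
      rw [abs_mul, Real.abs_exp]
      exact mul_le_of_le_one_left (Real.exp_nonneg _) (hk.bound _ (by positivity))
    · intro ξ
      exact (hl _ (by positivity)).mul_const _
  refine ⟨hψ, ?_, ?_, ?_⟩
  · intro r hr
    refine le_of_tendsto (hl r hr).abs ?_
    filter_upwards [hφ] with k hk using hk.bound r hr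
  · intro δ hδ x
    refine ge_of_tendsto (key δ hδ x) ?_
    filter_upwards [hφ] with k hk using hk.nonneg δ hδ x
  · intro δ hδ x
    refine le_of_tendsto ((key δ hδ x).mul_const _) ?_
    filter_upwards [hφ] with k hk using hk.le δ hδ x

lemma abs_exp_neg_mul_le_one {r s : ℝ} (hr : 0 ≤ r) (hs : 0 ≤ s) : |Real.exp (-r * s)| ≤ 1 := by
  rw [Real.abs_exp]
  exact Real.exp_le_one_iff.2 (by nlinarith)

lemma measurable_integral_exp_mul (ν : Measure ℝ) [SFinite ν] (w : ℝ → ℝ) (hw : Measurable w) :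
    Measurable (fun r => ∫ s, Real.exp (-r * s) * w s ∂ν) := by
  refine StronglyMeasurable.measurable (StronglyMeasurable.integral_prod_right
    (f := fun r s => Real.exp (-r * s) * w s) ?_)
  exact (by fun_prop : Measurable (Function.uncurry fun r s => Real.exp (-r * s) * w s)).stronglyMeasurable

lemma cosTransform_mul_laplace {n : ℕ} (hn : 1 ≤ n) {φ : ℝ → ℝ} (h : GaussDominated n φ)
    (ν : Measure ℝ) [SFinite ν] {w : ℝ → ℝ} (hwm : Measurable w) (hw : Integrable w ν)
    (hν : ∀ᵐ s ∂ν, 0 ≤ s) {δ : ℝ} (hδ : 0 < δ) (x : Rn n) :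
    cosTransform n (fun ξ => (φ (‖ξ‖ ^ 2) * ∫ s, Real.exp (-‖ξ‖ ^ 2 * s) * w s ∂ν) *
        Real.exp (-δ * ‖ξ‖ ^ 2)) x
      = ∫ s, cosTransform n (fun ξ => φ (‖ξ‖ ^ 2) * Real.exp (-(δ + s) * ‖ξ‖ ^ 2)) x * w s ∂ν := by
  simp only [cosTransform]
  have hφ := h.meas
  have e1 : ∀ ξ : Rn n, (φ (‖ξ‖ ^ 2) * ∫ s, Real.exp (-‖ξ‖ ^ 2 * s) * w s ∂ν) *
        Real.exp (-δ * ‖ξ‖ ^ 2) * Real.cos (2 * Real.pi * inner ℝ ξ x)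
      = ∫ s, (φ (‖ξ‖ ^ 2) * Real.exp (-(δ + s) * ‖ξ‖ ^ 2) *
          Real.cos (2 * Real.pi * inner ℝ ξ x)) * w s ∂ν := by
    intro ξ
    rw [← integral_const_mul, ← integral_mul_const, ← integral_mul_const]
    congr 1
    ext s
    have : Real.exp (-(δ + s) * ‖ξ‖ ^ 2) = Real.exp (-‖ξ‖ ^ 2 * s) * Real.exp (-δ * ‖ξ‖ ^ 2) := by
      rw [← Real.exp_add]; ring_nf
    rw [this]; ring
  simp only [e1, ← integral_mul_const]
  refine integral_integral_swap ?_
  have hi := (h.integrable hn hδ).mul_prod hw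
  refine hi.mono (by fun_prop : Measurable _).aestronglyMeasurable ?_
  have h0 : ∀ᵐ z ∂((volume : Measure (Rn n)).prod ν), 0 ≤ z.2 :=
    Measure.quasiMeasurePreserving_snd.ae hν
  filter_upwards [h0] with z hz
  simp only [Function.uncurry, norm_mul, Real.norm_eq_abs, Real.abs_exp]
  refine mul_le_mul_of_nonneg_right ?_ (abs_nonneg _)
  refine (mul_le_of_le_one_right (by positivity) (Real.abs_cos_le_one _)).trans ?_
  refine mul_le_mul_of_nonneg_left ?_ (abs_nonneg _)
  exact Real.exp_le_exp.2 (by nlinarith [sq_nonneg ‖z.1‖, mul_nonneg hz (sq_nonneg ‖z.1‖)])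

lemma GaussDominated.mul_laplace {n : ℕ} (hn : 1 ≤ n) {φ : ℝ → ℝ} (h : GaussDominated n φ)
    (ν : Measure ℝ) [SFinite ν] {w : ℝ → ℝ} (hwm : Measurable w) (hw : Integrable w ν)
    (hν : ∀ᵐ s ∂ν, 0 ≤ s) (hw0 : ∀ᵐ s ∂ν, 0 ≤ w s) {θ : ℝ} (hθ : 0 ≤ θ)
    (hθ1 : θ * ∫ s, w s ∂ν ≤ 1) :
    GaussDominated n
      (fun r => φ r * (1 - θ * ((∫ s, w s ∂ν) - ∫ s, Real.exp (-r * s) * w s ∂ν))) := by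
  set Λ := ∫ s, w s ∂ν with hΛ
  clear_value Λ
  have hφ := h.meas
  have hLm := measurable_integral_exp_mul ν w hwm
  have hL0 : ∀ r, 0 ≤ ∫ s, Real.exp (-r * s) * w s ∂ν := fun r =>
    integral_nonneg_of_ae (by filter_upwards [hw0] with s hs; simp only [Pi.zero_apply]; positivity)
  have hLi : ∀ r, 0 ≤ r → Integrable (fun s => Real.exp (-r * s) * w s) ν := by
    intro r hr
    refine hw.mono (by fun_prop : Measurable _).aestronglyMeasurable ?_
    filter_upwards [hν] with s hs
    rw [norm_mul]
    exact mul_le_of_le_one_left (norm_nonneg _) (abs_exp_neg_mul_le_one hr hs)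
  have hL1 : ∀ r, 0 ≤ r → ∫ s, Real.exp (-r * s) * w s ∂ν ≤ Λ := by
    intro r hr
    rw [hΛ]
    refine integral_mono_ae (hLi r hr) hw ?_
    filter_upwards [hν, hw0] with s hs hws
    exact mul_le_of_le_one_left hws ((le_abs_self _).trans (abs_exp_neg_mul_le_one hr hs))
  have key : ∀ δ > 0, ∀ x : Rn n, cosTransform n (fun ξ => (φ (‖ξ‖ ^ 2) *
      (1 - θ * (Λ - ∫ s, Real.exp (-‖ξ‖ ^ 2 * s) * w s ∂ν))) * Real.exp (-δ * ‖ξ‖ ^ 2)) x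
      = (1 - θ * Λ) * cosTransform n (fun ξ => φ (‖ξ‖ ^ 2) * Real.exp (-δ * ‖ξ‖ ^ 2)) x
        + θ * ∫ s, cosTransform n (fun ξ => φ (‖ξ‖ ^ 2) *
          Real.exp (-(δ + s) * ‖ξ‖ ^ 2)) x * w s ∂ν := by
    intro δ hδ x
    rw [← cosTransform_mul_laplace hn h ν hwm hw hν hδ x]
    simp only [cosTransform]
    rw [← integral_const_mul, ← integral_const_mul, ← integral_add]
    · congr 1
      ext ξ
      ring
    · exact (integrable_mul_cos n (h.integrable hn hδ) x).const_mul _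
    · have hLm' : Measurable fun ξ : Rn n => ∫ s, Real.exp (-‖ξ‖ ^ 2 * s) * w s ∂ν :=
        hLm.comp (by fun_prop : Measurable fun ξ : Rn n => ‖ξ‖ ^ 2)
      refine (integrable_mul_cos n ?_ x).const_mul _
      refine ((h.integrable hn hδ).norm.mul_const Λ).mono
        (by fun_prop : Measurable _).aestronglyMeasurable ?_
      filter_upwards with ξ
      rw [norm_mul, norm_mul, norm_mul, norm_norm, norm_mul,
        Real.norm_of_nonneg (hL0 _), Real.norm_of_nonneg ((hL0 0).trans (hL1 0 le_rfl))]
      rw [mul_right_comm]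
      exact mul_le_mul_of_nonneg_left (hL1 _ (by positivity)) (by positivity)
  have hJw : ∀ δ > 0, ∀ x : Rn n, 0 ≤ ∫ s, cosTransform n (fun ξ => φ (‖ξ‖ ^ 2) *
      Real.exp (-(δ + s) * ‖ξ‖ ^ 2)) x * w s ∂ν := by
    intro δ hδ x
    refine integral_nonneg_of_ae ?_
    filter_upwards [hν, hw0] with s hs hws
    exact mul_nonneg (h.nonneg _ (by linarith) x) hws
  refine ⟨by fun_prop, ?_, ?_, ?_⟩
  · intro r hr
    rw [abs_mul]
    refine mul_le_one₀ (h.bound r hr) (abs_nonneg _) ?_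
    rw [abs_le]
    have := mul_nonneg hθ (hL0 r)
    have := mul_le_mul_of_nonneg_left (hL1 r hr) hθ
    constructor <;> nlinarith
  · intro δ hδ x
    rw [key δ hδ x]
    exact add_nonneg (mul_nonneg (by linarith) (h.nonneg δ hδ x)) (mul_nonneg hθ (hJw δ hδ x))
  · intro δ hδ x
    rw [key δ hδ x, add_mul, mul_assoc, mul_assoc, ← integral_mul_const]
    have h1 : ∫ s, cosTransform n (fun ξ => φ (‖ξ‖ ^ 2) *
        Real.exp (-(δ + s) * ‖ξ‖ ^ 2)) x * w s * ‖x‖ ^ n ∂ν ≤ n.factorial * Λ := by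
      rw [hΛ, ← integral_const_mul]
      refine integral_mono_of_nonneg ?_ (hw.const_mul _) ?_
      · filter_upwards [hν, hw0] with s hs hws
        exact mul_nonneg (mul_nonneg (h.nonneg _ (by linarith) x) hws) (by positivity)
      · filter_upwards [hν, hw0] with s hs hws
        have := mul_le_mul_of_nonneg_right (h.le (δ + s) (by linarith) x) hws
        linarith
    have h2 := mul_le_mul_of_nonneg_left (h.le δ hδ x) (by linarith : 0 ≤ 1 - θ * Λ)
    have h3 := mul_le_mul_of_nonneg_left h1 hθ
    nlinarith

lemma gaussDominated_exp_neg_laplace {n : ℕ} (hn : 1 ≤ n)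
    (ν : Measure ℝ) [SFinite ν] {w : ℝ → ℝ} (hwm : Measurable w) (hw : Integrable w ν)
    (hν : ∀ᵐ s ∂ν, 0 ≤ s) (hw0 : ∀ᵐ s ∂ν, 0 ≤ w s) {t : ℝ} (ht : 0 ≤ t) :
    GaussDominated n
      (fun r => Real.exp (-(t * ((∫ s, w s ∂ν) - ∫ s, Real.exp (-r * s) * w s ∂ν)))) := by
  have hLm := measurable_integral_exp_mul ν w hwm
  refine GaussDominated.of_tendsto hn (φ := fun k r =>
    (1 + (-(t * ((∫ s, w s ∂ν) - ∫ s, Real.exp (-r * s) * w s ∂ν))) / (k:ℝ)) ^ k) ?_ ?_ ?_ ?_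
  · obtain ⟨K, hK⟩ := exists_nat_ge (t * ∫ s, w s ∂ν)
    filter_upwards [Filter.eventually_ge_atTop (max K 1)] with k hk
    have hk1 : 1 ≤ k := le_trans (le_max_right _ _) hk
    have hkK : (K:ℝ) ≤ k := by exact_mod_cast le_trans (le_max_left _ _) hk
    have hk0 : (0:ℝ) < k := by exact_mod_cast hk1
    have : ∀ m : ℕ, GaussDominated n (fun r =>
        (1 + (-(t * ((∫ s, w s ∂ν) - ∫ s, Real.exp (-r * s) * w s ∂ν))) / (k:ℝ)) ^ m) := by
      intro m
      induction m with
      | zero => simpa using gaussDominated_one n hn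
      | succ m ih =>
        have := ih.mul_laplace hn ν hwm hw hν hw0 (θ := t / k) (by positivity)
          (by rw [div_mul_eq_mul_div, div_le_one hk0]; linarith)
        convert this using 2 with r
        rw [pow_succ]
        congr 1
        ring
    exact this k
  · intro k; fun_prop
  · fun_prop
  · intro r _
    exact Real.tendsto_one_add_div_pow_exp _

lemma integrableOn_one_sub_exp_mul_rpow {α : ℝ} (h0 : 0 < α) (h1 : α < 1) {r : ℝ} (hr : 0 ≤ r) :
    IntegrableOn (fun s : ℝ => (1 - Real.exp (-r * s)) * s ^ (-1 - α)) (Ioi 0) := by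
  have hm : Measurable (fun s : ℝ => (1 - Real.exp (-r * s)) * s ^ (-1 - α)) := by fun_prop
  rw [← Ioc_union_Ioi_eq_Ioi zero_le_one]
  refine IntegrableOn.union ?_ ?_
  · have hi : IntegrableOn (fun s : ℝ => r * s ^ (-α)) (Ioc 0 1) :=
      ((intervalIntegral.intervalIntegrable_rpow' (a := 0) (b := 1) (r := -α)
        (by linarith)).1).const_mul r
    refine Integrable.mono hi hm.aestronglyMeasurable ?_
    filter_upwards [ae_restrict_mem measurableSet_Ioc] with s hs
    have h2 : 0 ≤ 1 - Real.exp (-r * s) := by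
      have := abs_exp_neg_mul_le_one hr hs.1.le
      linarith [le_abs_self (Real.exp (-r * s))]
    have h3 : 1 - Real.exp (-r * s) ≤ r * s := by
      have := Real.add_one_le_exp (-r * s); linarith
    have hs' := Real.rpow_nonneg hs.1.le (-1 - α)
    have e : s ^ (-α) = s * s ^ (-1 - α) := by
      rw [show -α = 1 + (-1 - α) by ring, Real.rpow_add hs.1, Real.rpow_one]
    rw [Real.norm_of_nonneg (mul_nonneg h2 hs'), e, ← mul_assoc]
    exact (mul_le_mul_of_nonneg_right h3 hs').trans (le_abs_self _)
  · have hi : IntegrableOn (fun s : ℝ => s ^ (-1 - α)) (Ioi 1) :=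
      integrableOn_Ioi_rpow_of_lt (by linarith) one_pos
    refine Integrable.mono hi hm.aestronglyMeasurable ?_
    filter_upwards [ae_restrict_mem measurableSet_Ioi] with s hs
    have hs0 : 0 ≤ s := zero_le_one.trans (le_of_lt hs)
    have h2 := abs_exp_neg_mul_le_one hr hs0
    rw [norm_mul]
    refine mul_le_of_le_one_left (norm_nonneg _) ?_
    rw [Real.norm_eq_abs, abs_le]
    rw [abs_le] at h2
    have := Real.exp_pos (-r * s)
    constructor <;> linarith

lemma integral_one_sub_exp_mul_rpow {α : ℝ} (h0 : 0 < α) {r : ℝ} (hr : 0 ≤ r) :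
    ∫ s in Ioi (0:ℝ), (1 - Real.exp (-r * s)) * s ^ (-1 - α)
      = r ^ α * ∫ s in Ioi (0:ℝ), (1 - Real.exp (-s)) * s ^ (-1 - α) := by
  rcases hr.eq_or_lt with rfl | hr
  · simp [Real.zero_rpow h0.ne']
  have h := integral_comp_mul_left_Ioi (fun s => (1 - Real.exp (-s)) * s ^ (-1 - α)) 0 hr
  rw [mul_zero, smul_eq_mul] at h
  have e : ∫ s in Ioi (0:ℝ), (1 - Real.exp (-(r * s))) * (r * s) ^ (-1 - α)
      = r ^ (-1 - α) * ∫ s in Ioi (0:ℝ), (1 - Real.exp (-r * s)) * s ^ (-1 - α) := by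
    rw [← integral_const_mul]
    refine setIntegral_congr_fun measurableSet_Ioi fun s hs => ?_
    rw [Real.mul_rpow hr.le (le_of_lt hs), neg_mul]
    ring
  rw [e] at h
  have e2 : r ^ α * r ^ (-1 - α) = r⁻¹ := by
    rw [← Real.rpow_add hr, ← Real.rpow_neg_one]; ring_nf
  have hp := Real.rpow_pos_of_pos hr (-1 - α)
  have : r ^ (-1 - α) * (∫ s in Ioi (0:ℝ), (1 - Real.exp (-r * s)) * s ^ (-1 - α))
      = r ^ (-1 - α) * (r ^ α * ∫ s in Ioi (0:ℝ), (1 - Real.exp (-s)) * s ^ (-1 - α)) := by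
    rw [h, ← e2]; ring
  exact mul_left_cancel₀ hp.ne' this

lemma integral_one_sub_exp_mul_rpow_pos {α : ℝ} (h0 : 0 < α) (h1 : α < 1) :
    0 < ∫ s in Ioi (0:ℝ), (1 - Real.exp (-s)) * s ^ (-1 - α) := by
  have hi := integrableOn_one_sub_exp_mul_rpow h0 h1 (zero_le_one' ℝ)
  simp only [neg_mul, one_mul] at hi
  rw [setIntegral_pos_iff_support_of_nonneg_ae ?_ hi]
  · have : Ioi (0:ℝ) ⊆ (Function.support fun s => (1 - Real.exp (-s)) * s ^ (-1 - α)) ∩ Ioi 0 := by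
      intro s hs
      refine ⟨?_, hs⟩
      have h2 : Real.exp (-s) < 1 := Real.exp_lt_one_iff.mpr (by simpa using hs)
      exact (mul_pos (by linarith) (Real.rpow_pos_of_pos hs _)).ne'
    refine lt_of_lt_of_le ?_ (measure_mono this)
    simp
  · filter_upwards [ae_restrict_mem measurableSet_Ioi] with s hs
    have h2 : Real.exp (-s) < 1 := Real.exp_lt_one_iff.mpr (by simpa using hs)
    exact (mul_pos (by linarith) (Real.rpow_pos_of_pos hs _)).le

lemma gaussDominated_exp_neg_rpow {n : ℕ} (hn : 1 ≤ n) {α : ℝ} (h0 : 0 < α) (h1 : α < 1)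
    {t : ℝ} (ht : 0 ≤ t) : GaussDominated n (fun r => Real.exp (-t * r ^ α)) := by
  set c := ∫ s in Ioi (0:ℝ), (1 - Real.exp (-s)) * s ^ (-1 - α) with hc
  have hc0 : 0 < c := integral_one_sub_exp_mul_rpow_pos h0 h1
  have hε : ∀ k : ℕ, (0:ℝ) < 1 / ((k:ℝ) + 1) := fun k => Nat.one_div_pos_of_nat
  have hw : ∀ k : ℕ, IntegrableOn (fun s : ℝ => s ^ (-1 - α)) (Ioi (1 / ((k:ℝ) + 1))) := fun k =>
    integrableOn_Ioi_rpow_of_lt (by linarith) (hε k)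
  have hs0 : ∀ k : ℕ, ∀ᵐ s ∂(volume.restrict (Ioi (1 / ((k:ℝ) + 1)))), (0:ℝ) ≤ s := fun k => by
    filter_upwards [ae_restrict_mem measurableSet_Ioi] with s hs using ((hε k).trans hs).le
  refine GaussDominated.of_tendsto hn (φ := fun (k : ℕ) r =>
    Real.exp (-(t / c * ((∫ s in Ioi (1 / ((k:ℝ) + 1)), s ^ (-1 - α)) -
      ∫ s in Ioi (1 / ((k:ℝ) + 1)), Real.exp (-r * s) * s ^ (-1 - α))))) ?_ ?_ (by fun_prop) ?_
  · filter_upwards with k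
    refine gaussDominated_exp_neg_laplace hn _ (by fun_prop) (hw k) (hs0 k) ?_ (by positivity)
    filter_upwards [hs0 k] with s hs using Real.rpow_nonneg hs _
  · intro k
    have := measurable_integral_exp_mul (volume.restrict (Ioi (1 / ((k:ℝ) + 1))))
      (fun s => s ^ (-1 - α)) (by fun_prop)
    fun_prop
  · intro r hr
    have hU : (⋃ k : ℕ, Ioi (1 / ((k:ℝ) + 1))) = Ioi (0:ℝ) := by
      ext s
      simp only [mem_iUnion, mem_Ioi]
      exact ⟨fun ⟨k, hk⟩ => (hε k).trans hk, fun hs => exists_nat_one_div_lt hs⟩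
    have hmono : Monotone fun k : ℕ => Ioi (1 / ((k:ℝ) + 1)) := fun i j hij =>
      Ioi_subset_Ioi (Nat.one_div_le_one_div hij)
    have hi := integrableOn_one_sub_exp_mul_rpow h0 h1 hr
    have hl := tendsto_setIntegral_of_monotone (μ := volume)
      (f := fun s : ℝ => (1 - Real.exp (-r * s)) * s ^ (-1 - α))
      (fun k : ℕ => measurableSet_Ioi (a := 1 / ((k:ℝ) + 1))) hmono (by rwa [hU])
    rw [hU, integral_one_sub_exp_mul_rpow h0 hr, ← hc] at hl
    have e : ∀ k : ℕ, ∫ s in Ioi (1 / ((k:ℝ) + 1)), (1 - Real.exp (-r * s)) * s ^ (-1 - α)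
        = (∫ s in Ioi (1 / ((k:ℝ) + 1)), s ^ (-1 - α)) -
          ∫ s in Ioi (1 / ((k:ℝ) + 1)), Real.exp (-r * s) * s ^ (-1 - α) := by
      intro k
      rw [← integral_sub (hw k)]
      · congr 1; ext s; ring
      · refine Integrable.mono (hw k) (by fun_prop : Measurable fun s : ℝ =>
          Real.exp (-r * s) * s ^ (-1 - α)).aestronglyMeasurable ?_
        filter_upwards [hs0 k] with s hs
        rw [norm_mul]
        exact mul_le_of_le_one_left (norm_nonneg _) (abs_exp_neg_mul_le_one hr hs)
    simp only [e] at hl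
    refine (Real.continuous_exp.tendsto _).comp ?_
    have := (hl.const_mul (t / c)).neg
    convert this using 2
    field_simp

lemma gKer_eq_cosTransform {n : ℕ} (hn : 1 ≤ n) {α t : ℝ} (hα : 0 < α) (ht : 0 < t) (x : Rn n) :
    gKer n α t x = cosTransform n (fun ξ => Real.exp (-t * ‖ξ‖ ^ (2 * α))) x :=
  re_fourierInv_ofReal n (integrable_exp_neg_mul_norm_rpow n hn ht (by positivity)) x

lemma gKer_nonneg_and_mul_le {n : ℕ} (hn : 1 ≤ n) {α t : ℝ} (hα : 0 < α) (hα1 : α ≤ 1) (ht : 0 < t)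
    (x : Rn n) : 0 ≤ gKer n α t x ∧ gKer n α t x * ‖x‖ ^ n ≤ n.factorial := by
  rw [gKer_eq_cosTransform hn hα ht]
  rcases hα1.eq_or_lt with rfl | hα1
  · have e : (fun ξ : Rn n => Real.exp (-t * ‖ξ‖ ^ ((2:ℝ) * 1)))
        = fun ξ => Real.exp (-t * ‖ξ‖ ^ 2) := by
      ext ξ; simp
    rw [e]
    refine ⟨?_, cosTransform_gaussian_mul_le n hn ht x⟩
    rw [cosTransform_gaussian n hn ht]
    positivity
  have hG := gaussDominated_exp_neg_rpow hn hα hα1 ht.le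
  have hε : ∀ k : ℕ, (0:ℝ) < 1 / ((k:ℝ) + 1) := fun k => Nat.one_div_pos_of_nat
  have hl := tendsto_cosTransform n
    (σ := fun (k : ℕ) ξ => Real.exp (-t * (‖ξ‖ ^ 2) ^ α) * Real.exp (-(1 / ((k:ℝ) + 1)) * ‖ξ‖ ^ 2))
    (τ := fun ξ => Real.exp (-t * ‖ξ‖ ^ (2 * α)))
    (integrable_exp_neg_mul_norm_rpow n hn ht (by positivity : 0 < 2 * α))
    (fun k => (by fun_prop : Measurable _).aestronglyMeasurable) ?_ ?_ x
  · exact ⟨ge_of_tendsto' hl fun k => hG.nonneg _ (hε k) x,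
      le_of_tendsto' (hl.mul_const _) fun k => hG.le _ (hε k) x⟩
  · filter_upwards with k ξ
    rw [Real.rpow_mul (norm_nonneg _), Real.rpow_two, abs_mul, Real.abs_exp, Real.abs_exp]
    refine mul_le_of_le_one_right (Real.exp_nonneg _) (Real.exp_le_one_iff.2 ?_)
    have := mul_nonneg (hε k).le (sq_nonneg ‖ξ‖)
    linarith
  · intro ξ
    rw [Real.rpow_mul (norm_nonneg _), Real.rpow_two]
    have h := (tendsto_one_div_add_atTop_nhds_zero_nat (𝕜 := ℝ)).neg.mul_const (‖ξ‖ ^ 2)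
    have := ((Real.continuous_exp.tendsto _).comp h).const_mul (Real.exp (-t * (‖ξ‖ ^ 2) ^ α))
    simpa using this

lemma exists_gKer_le_rpow {n : ℕ} (hn : 1 ≤ n) {α : ℝ} (hα : 0 < α) :
    ∃ B : ℝ, 0 < B ∧ ∀ t > 0, ∀ x : Rn n, gKer n α t x ≤ B * t ^ (-((n:ℝ) / (2 * α))) := by
  set I := ∫ ξ : Rn n, Real.exp (-1 * ‖ξ‖ ^ (2 * α)) with hI
  have hI0 : 0 ≤ I := integral_nonneg fun _ => Real.exp_nonneg _
  refine ⟨I + 1, by positivity, fun t ht x => ?_⟩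
  have hi := integrable_exp_neg_mul_norm_rpow n hn ht (by positivity : 0 < 2 * α)
  rw [gKer_eq_cosTransform hn hα ht]
  have h1 : cosTransform n (fun ξ => Real.exp (-t * ‖ξ‖ ^ (2 * α))) x
      ≤ ∫ ξ : Rn n, Real.exp (-t * ‖ξ‖ ^ (2 * α)) :=
    integral_mono (integrable_mul_cos n hi x) hi fun ξ =>
      mul_le_of_le_one_right (Real.exp_nonneg _) (Real.cos_le_one _)
  have h2 := Measure.integral_comp_smul (volume : Measure (Rn n))
    (fun ξ => Real.exp (-1 * ‖ξ‖ ^ (2 * α))) (t ^ (1 / (2 * α)))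
  have e : ∀ ξ : Rn n, Real.exp (-1 * ‖t ^ (1 / (2 * α)) • ξ‖ ^ (2 * α))
      = Real.exp (-t * ‖ξ‖ ^ (2 * α)) := by
    intro ξ
    rw [norm_smul, Real.norm_of_nonneg (by positivity), Real.mul_rpow (by positivity) (norm_nonneg _),
      ← Real.rpow_mul ht.le, one_div_mul_cancel (by positivity), Real.rpow_one]
    ring_nf
  simp only [e, finrank_euclideanSpace_fin, smul_eq_mul] at h2
  rw [h2] at h1
  refine h1.trans ?_
  rw [← hI, abs_of_nonneg (by positivity), mul_comm, ← Real.rpow_natCast, ← Real.rpow_mul ht.le,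
    ← Real.rpow_neg ht.le, show -(1 / (2 * α) * (n:ℝ)) = -((n:ℝ) / (2 * α)) by ring]
  exact mul_le_mul_of_nonneg_right (by linarith) (by positivity)

lemma lintegral_Ioc_rpow {c S : ℝ} (hc : 0 < c) (hS : 0 ≤ S) :
    ∫⁻ s in Ioc 0 S, ENNReal.ofReal (s ^ (c - 1)) = ENNReal.ofReal (S ^ c / c) := by
  have hi : IntervalIntegrable (fun s : ℝ => s ^ (c - 1)) volume 0 S :=
    intervalIntegral.intervalIntegrable_rpow' (by linarith)
  rw [← ofReal_integral_eq_lintegral_ofReal hi.1]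
  · rw [← intervalIntegral.integral_of_le hS, integral_rpow (Or.inl (by linarith))]
    simp [Real.zero_rpow hc.ne']
  · filter_upwards [ae_restrict_mem measurableSet_Ioc] with s hs using Real.rpow_nonneg hs.1.le _

lemma lintegral_Ioi_rpow {c S : ℝ} (hc : 0 < c) (hS : 0 < S) :
    ∫⁻ s in Ioi S, ENNReal.ofReal (s ^ (-c - 1)) = ENNReal.ofReal (S ^ (-c) / c) := by
  rw [← ofReal_integral_eq_lintegral_ofReal (integrableOn_Ioi_rpow_of_lt (by linarith) hS)]
  · rw [integral_Ioi_rpow_of_lt (by linarith) hS]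
    congr 1
    rw [show -c - 1 + 1 = -c by ring]
    field_simp
  · filter_upwards [ae_restrict_mem measurableSet_Ioi] with s hs
      using Real.rpow_nonneg (hS.trans hs).le _

lemma lintegral_min_rpow_le {n β : ℝ} (hβ : 0 < β) (hn : β < n) {ρ : ℝ} (hρ : 0 < ρ) :
    ∫⁻ t in Ioi (0:ℝ), ENNReal.ofReal (min (t ^ (-(n / β))) (ρ ^ (-n)))
      ≤ ENNReal.ofReal ((1 + 1 / (n / β - 1)) * ρ ^ (β - n)) := by
  have hc : 0 < n / β - 1 := by rw [sub_pos, one_lt_div hβ]; exact hn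
  have hT : 0 < ρ ^ β := Real.rpow_pos_of_pos hρ _
  rw [← Ioc_union_Ioi_eq_Ioi hT.le, add_mul, ENNReal.ofReal_add (by positivity) (by positivity)]
  refine (lintegral_union_le _ _ _).trans (add_le_add ?_ ?_)
  · calc ∫⁻ t in Ioc 0 (ρ ^ β), ENNReal.ofReal (min (t ^ (-(n / β))) (ρ ^ (-n)))
        ≤ ∫⁻ _ in Ioc 0 (ρ ^ β), ENNReal.ofReal (ρ ^ (-n)) :=
          lintegral_mono fun t => ENNReal.ofReal_le_ofReal (min_le_right _ _)
      _ = ENNReal.ofReal (1 * ρ ^ (β - n)) := by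
          rw [lintegral_const, Measure.restrict_apply_univ, Real.volume_Ioc, sub_zero,
            ← ENNReal.ofReal_mul (by positivity), ← Real.rpow_add hρ]
          ring_nf
  · calc ∫⁻ t in Ioi (ρ ^ β), ENNReal.ofReal (min (t ^ (-(n / β))) (ρ ^ (-n)))
        ≤ ∫⁻ t in Ioi (ρ ^ β), ENNReal.ofReal (t ^ (-(n / β - 1) - 1)) := by
          refine lintegral_mono fun t => ENNReal.ofReal_le_ofReal ((min_le_left _ _).trans_eq ?_)
          ring_nf
      _ = ENNReal.ofReal (1 / (n / β - 1) * ρ ^ (β - n)) := by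
          rw [lintegral_Ioi_rpow hc hT, ← Real.rpow_mul hρ.le]
          congr 1
          rw [show β * -(n / β - 1) = β - n by field_simp; ring]
          ring

lemma measurable_timeSup {n : ℕ} {F : ℝ → Rn n → ℝ} (hF : Measurable (Function.uncurry F)) :
    Measurable (timeSup n F) := by
  refine measurable_of_Ioi fun a => ?_
  have hS : MeasurableSet {z : ℝ × Rn n | a < ENNReal.ofReal |Function.uncurry F z|} :=
    measurableSet_lt measurable_const (by fun_prop)
  have hm := measurable_measure_prodMk_right (μ := volume.restrict (Ioi (0:ℝ))) hS
  have e : timeSup n F ⁻¹' Ioi a = {x | 0 < (volume.restrict (Ioi (0:ℝ)))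
      ((fun t => (t, x)) ⁻¹' {z : ℝ × Rn n | a < ENNReal.ofReal |Function.uncurry F z|})} := by
    ext x
    simp only [mem_preimage, mem_Ioi, mem_ofPred_eq, preimage_ofPred_eq, Function.uncurry]
    constructor
    · intro h
      by_contra h0
      rw [not_lt, nonpos_iff_eq_zero] at h0
      refine absurd h (not_lt.2 (essSup_le_of_ae_le a ?_))
      rw [Filter.EventuallyLE, ae_iff]
      simpa only [not_le] using h0
    · intro h
      by_contra h0
      rw [not_lt] at h0
      refine h.ne' ?_
      have : ∀ᵐ t ∂(volume.restrict (Ioi (0:ℝ))), ENNReal.ofReal |F t x| ≤ a := by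
        filter_upwards [ENNReal.ae_le_essSup (μ := volume.restrict (Ioi (0:ℝ)))
          (fun t => ENNReal.ofReal |F t x|)] with t ht using ht.trans h0
      simpa only [ae_iff, not_le] using this
  rw [e]
  exact measurableSet_lt measurable_const hm

/-- Riesz potential of order `β` (up to normalization). -/
def rieszPot (n : ℕ) (β : ℝ) (f : Rn n → ℝ≥0∞) (x : Rn n) : ℝ≥0∞ :=
  ∫⁻ y, ENNReal.ofReal (‖x - y‖ ^ (β - n)) * f y

lemma exists_gKer_le_min {n : ℕ} (hn : 1 ≤ n) {α : ℝ} (hα : 0 < α) (hα1 : α ≤ 1) :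
    ∃ K : ℝ, 0 < K ∧ ∀ t > 0, ∀ z : Rn n, z ≠ 0 →
      |gKer n α t z| ≤ K * min (t ^ (-((n:ℝ) / (2 * α)))) (‖z‖ ^ (-(n:ℝ))) := by
  obtain ⟨B, hB, hle⟩ := exists_gKer_le_rpow hn hα
  refine ⟨B + n.factorial, by positivity, fun t ht z hz => ?_⟩
  obtain ⟨h0, h1⟩ := gKer_nonneg_and_mul_le hn hα hα1 ht z
  have hz' : 0 < ‖z‖ := norm_pos_iff.2 hz
  rw [abs_of_nonneg h0, mul_min_of_nonneg _ _ (by positivity), le_min_iff]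
  constructor
  · refine (hle t ht z).trans (mul_le_mul_of_nonneg_right ?_ (by positivity))
    have : (0:ℝ) ≤ n.factorial := by positivity
    linarith
  · rw [Real.rpow_neg hz'.le, Real.rpow_natCast, ← div_eq_mul_inv, le_div_iff₀ (by positivity)]
    linarith

lemma exists_timeSup_duhamel_le {n : ℕ} (hn : 1 ≤ n) {α : ℝ} (hα : 0 < α) (hα1 : α ≤ 1)
    (h2α : 2 * α < n) : ∃ K : ℝ, 0 < K ∧ ∀ F : ℝ → Rn n → ℝ, Measurable (Function.uncurry F) →
      ∀ x, timeSup n (fun t x => ∫ s in Ioc (0:ℝ) t, conv n (gKer n α (t - s)) (F s) x) x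
        ≤ ENNReal.ofReal K * rieszPot n (2 * α) (timeSup n F) x := by
  obtain ⟨K, hK, hle⟩ := exists_gKer_le_min hn hα hα1
  set a := (n:ℝ) / (2 * α) with ha
  have ha1 : 0 < a - 1 := by rw [sub_pos, ha, one_lt_div (by positivity)]; exact h2α
  refine ⟨K * (1 + 1 / (a - 1)), by positivity, fun F hF x => ?_⟩
  have : Nonempty (Fin n) := ⟨⟨0, hn⟩⟩
  have hne : ∀ᵐ y : Rn n, x - y ≠ 0 := by
    have : ∀ᵐ y : Rn n, y ≠ x := by simp [ae_iff]
    filter_upwards [this] with y hy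
    rw [sub_ne_zero]; exact hy.symm
  set k : ℝ → Rn n → ℝ≥0∞ := fun τ z => (Ioi (0:ℝ)).indicator
    (fun τ => ENNReal.ofReal (min (τ ^ (-a)) (‖z‖ ^ (-(n:ℝ))))) τ with hk
  have hkm : Measurable (Function.uncurry k) := by
    have : Function.uncurry k = (Prod.fst ⁻¹' Ioi (0:ℝ)).indicator
        (fun w : ℝ × Rn n => ENNReal.ofReal (min (w.1 ^ (-a)) (‖w.2‖ ^ (-(n:ℝ))))) := by
      ext w; rfl
    rw [this]
    exact Measurable.indicator (by fun_prop) (measurable_fst measurableSet_Ioi)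
  have hkint : ∀ z ≠ 0, ∀ t : ℝ, ∫⁻ s in Ioc 0 t, k (t - s) z
      ≤ ENNReal.ofReal ((1 + 1 / (a - 1)) * ‖z‖ ^ (2 * α - n)) := by
    intro z hz t
    calc ∫⁻ s in Ioc 0 t, k (t - s) z ≤ ∫⁻ s, k (t - s) z := setLIntegral_le_lintegral _ _
      _ = ∫⁻ s, k s z := lintegral_sub_left_eq_self (fun s => k s z) t
      _ = ∫⁻ s in Ioi (0:ℝ), ENNReal.ofReal (min (s ^ (-a)) (‖z‖ ^ (-(n:ℝ)))) :=
          lintegral_indicator measurableSet_Ioi _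
      _ ≤ _ := lintegral_min_rpow_le (by positivity) h2α (norm_pos_iff.2 hz)
  refine essSup_le_of_ae_le _ (Filter.Eventually.of_forall fun t => ?_)
  beta_reduce
  rw [← Real.enorm_eq_ofReal_abs]
  calc ‖∫ s in Ioc (0:ℝ) t, conv n (gKer n α (t - s)) (F s) x‖ₑ
      ≤ ∫⁻ s in Ioc 0 t, ‖conv n (gKer n α (t - s)) (F s) x‖ₑ := enorm_integral_le_lintegral_enorm _
    _ ≤ ∫⁻ s in Ioc 0 t, ∫⁻ y, ENNReal.ofReal K * (k (t - s) (x - y) * ENNReal.ofReal |F s y|) := by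
        have hst : ∀ᵐ s : ℝ, s ≠ t := by simp [ae_iff]
        refine lintegral_mono_ae ?_
        filter_upwards [ae_restrict_mem measurableSet_Ioc, ae_restrict_of_ae hst] with s hs hst
        refine (enorm_integral_le_lintegral_enorm _).trans (lintegral_mono_ae ?_)
        filter_upwards [hne] with y hy
        have h0 : 0 < t - s := sub_pos.2 (lt_of_le_of_ne hs.2 hst)
        rw [enorm_mul, Real.enorm_eq_ofReal_abs, Real.enorm_eq_ofReal_abs, ← mul_assoc]
        refine mul_le_mul_left ?_ _
        rw [hk]
        simp only [indicator_of_mem (mem_Ioi.2 h0)]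
        rw [← ENNReal.ofReal_mul hK.le]
        exact ENNReal.ofReal_le_ofReal (hle _ h0 _ hy)
    _ = ∫⁻ y, ∫⁻ s in Ioc 0 t, ENNReal.ofReal K * (k (t - s) (x - y) * ENNReal.ofReal |F s y|) := by
        refine lintegral_lintegral_swap (Measurable.aemeasurable ?_)
        have h1 : Measurable fun w : ℝ × Rn n => k (t - w.1) (x - w.2) :=
          hkm.comp (by fun_prop : Measurable fun w : ℝ × Rn n => (t - w.1, x - w.2))
        have h2 : Measurable fun w : ℝ × Rn n => ENNReal.ofReal |F w.1 w.2| :=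
          (by fun_prop : Measurable fun r : ℝ => ENNReal.ofReal |r|).comp hF
        exact (h1.mul h2).const_mul _
    _ ≤ ∫⁻ y, ENNReal.ofReal (K * (1 + 1 / (a - 1))) *
          (ENNReal.ofReal (‖x - y‖ ^ (2 * α - n)) * timeSup n F y) := by
        refine lintegral_mono_ae ?_
        filter_upwards [hne] with y hy
        have h1 : Measurable fun s : ℝ => k (t - s) (x - y) :=
          hkm.comp (by fun_prop : Measurable fun s : ℝ => (t - s, x - y))
        calc ∫⁻ s in Ioc 0 t, ENNReal.ofReal K * (k (t - s) (x - y) * ENNReal.ofReal |F s y|)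
            ≤ ∫⁻ s in Ioc 0 t, (ENNReal.ofReal K * timeSup n F y) * k (t - s) (x - y) := by
              refine lintegral_mono_ae ?_
              have h2 : ∀ᵐ s ∂(volume.restrict (Ioc 0 t)),
                  ENNReal.ofReal |F s y| ≤ timeSup n F y :=
                ae_restrict_of_ae_restrict_of_subset (fun s hs => hs.1)
                  (ENNReal.ae_le_essSup (μ := volume.restrict (Ioi (0:ℝ)))
                    (fun t => ENNReal.ofReal |F t y|))
              filter_upwards [h2] with s hs
              rw [mul_assoc, mul_comm (timeSup n F y)]
              gcongr
          _ = (ENNReal.ofReal K * timeSup n F y) * ∫⁻ s in Ioc 0 t, k (t - s) (x - y) :=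
              lintegral_const_mul _ h1
          _ ≤ (ENNReal.ofReal K * timeSup n F y) *
                ENNReal.ofReal ((1 + 1 / (a - 1)) * ‖x - y‖ ^ (2 * α - n)) := by
              gcongr
              exact hkint _ hy t
          _ = _ := by
              rw [ENNReal.ofReal_mul hK.le, ENNReal.ofReal_mul (by positivity : 0 ≤ 1 + 1 / (a - 1))]
              ring
    _ = ENNReal.ofReal (K * (1 + 1 / (a - 1))) * rieszPot n (2 * α) (timeSup n F) x :=
        lintegral_const_mul' _ _ ENNReal.ofReal_ne_top

/-- Centered maximal function over balls of dyadic radii. -/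
def dyMax (n : ℕ) (f : Rn n → ℝ≥0∞) (x : Rn n) : ℝ≥0∞ :=
  ⨆ k : ℤ, (∫⁻ y in Metric.closedBall x ((2:ℝ) ^ k), f y) / volume (Metric.closedBall x ((2:ℝ) ^ k))

lemma volume_closedBall_Rn (n : ℕ) (x : Rn n) {r : ℝ} (hr : 0 ≤ r) :
    volume (Metric.closedBall x r)
      = ENNReal.ofReal (r ^ n) * volume (Metric.ball (0 : Rn n) 1) := by
  rw [Measure.addHaar_closedBall _ _ hr, finrank_euclideanSpace_fin]

lemma volume_closedBall_ne_zero (n : ℕ) (x : Rn n) {r : ℝ} (hr : 0 < r) :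
    volume (Metric.closedBall x r) ≠ 0 := (Metric.measure_closedBall_pos volume x hr).ne'

lemma volume_closedBall_ne_top (n : ℕ) (x : Rn n) (r : ℝ) :
    volume (Metric.closedBall x r) ≠ ⊤ := measure_closedBall_lt_top.ne

lemma measurable_dyMax {n : ℕ} {f : Rn n → ℝ≥0∞} (hf : Measurable f) :
    Measurable (dyMax n f) := by
  refine Measurable.iSup fun k => ?_
  simp only [Measure.addHaar_closedBall_center volume]
  refine Measurable.div_const ?_ _
  have e : (fun x : Rn n => ∫⁻ y in Metric.closedBall x ((2:ℝ) ^ k), f y)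
      = fun x => ∫⁻ y, {z : Rn n × Rn n | dist z.2 z.1 ≤ (2:ℝ) ^ k}.indicator (fun z => f z.2) (x, y) := by
    ext x
    rw [← lintegral_indicator measurableSet_closedBall]
    rfl
  rw [e]
  refine Measurable.lintegral_prod_right' (f := {z : Rn n × Rn n | dist z.2 z.1 ≤ (2:ℝ) ^ k}.indicator
    (fun z => f z.2)) ?_
  exact (hf.comp measurable_snd).indicator (measurableSet_le (by fun_prop) measurable_const)

lemma lintegral_closedBall_le_dyMax {n : ℕ} (f : Rn n → ℝ≥0∞) (x : Rn n) {r : ℝ} (hr : 0 < r) :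
    ∫⁻ y in Metric.closedBall x r, f y
      ≤ ENNReal.ofReal ((2 * r) ^ n) * volume (Metric.ball (0 : Rn n) 1) * dyMax n f x := by
  obtain ⟨k, hk1, hk2⟩ := exists_mem_Ioc_zpow hr (one_lt_two (α := ℝ))
  have h2 : (2:ℝ) ^ (k + 1) ≤ 2 * r := by
    rw [zpow_add_one₀ two_ne_zero]; linarith
  have hpos : (0:ℝ) < 2 ^ (k + 1) := by positivity
  calc ∫⁻ y in Metric.closedBall x r, f y ≤ ∫⁻ y in Metric.closedBall x ((2:ℝ) ^ (k + 1)), f y :=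
        lintegral_mono_set (Metric.closedBall_subset_closedBall hk2)
    _ = volume (Metric.closedBall x ((2:ℝ) ^ (k + 1))) *
          ((∫⁻ y in Metric.closedBall x ((2:ℝ) ^ (k + 1)), f y) /
            volume (Metric.closedBall x ((2:ℝ) ^ (k + 1)))) :=
        (ENNReal.mul_div_cancel (volume_closedBall_ne_zero n x hpos)
          (volume_closedBall_ne_top n x _)).symm
    _ ≤ ENNReal.ofReal ((2 * r) ^ n) * volume (Metric.ball (0 : Rn n) 1) * dyMax n f x := by
        refine mul_le_mul' ?_ (le_iSup (fun k : ℤ => (∫⁻ y in Metric.closedBall x ((2:ℝ) ^ k), f y) /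
          volume (Metric.closedBall x ((2:ℝ) ^ k))) (k + 1))
        rw [volume_closedBall_Rn n x hpos.le]
        gcongr

lemma dyMax_le_add_const {n : ℕ} {f g : Rn n → ℝ≥0∞} {c : ℝ≥0∞} (h : ∀ y, f y ≤ g y + c)
    (x : Rn n) : dyMax n f x ≤ dyMax n g x + c := by
  refine iSup_le fun k => ?_
  have hpos : (0:ℝ) < 2 ^ k := by positivity
  calc (∫⁻ y in Metric.closedBall x ((2:ℝ) ^ k), f y) / volume (Metric.closedBall x ((2:ℝ) ^ k))
      ≤ (∫⁻ y in Metric.closedBall x ((2:ℝ) ^ k), (g y + c)) /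
          volume (Metric.closedBall x ((2:ℝ) ^ k)) := by
        gcongr with y; exact h y
    _ = (∫⁻ y in Metric.closedBall x ((2:ℝ) ^ k), g y) /
          volume (Metric.closedBall x ((2:ℝ) ^ k)) + c := by
        rw [lintegral_add_right _ measurable_const, setLIntegral_const, ENNReal.add_div,
          ENNReal.mul_div_cancel_right (volume_closedBall_ne_zero n x hpos)
          (volume_closedBall_ne_top n x _)]
    _ ≤ _ := by
        gcongr
        exact le_iSup (fun k : ℤ => (∫⁻ y in Metric.closedBall x ((2:ℝ) ^ k), g y) /
          volume (Metric.closedBall x ((2:ℝ) ^ k))) k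

lemma mul_volume_dyMax_le {n : ℕ} (hn : 1 ≤ n) (f : Rn n → ℝ≥0∞)
    {lam : ℝ≥0∞} (h0 : lam ≠ 0) (ht : lam ≠ ⊤) :
    lam * volume {x | lam < dyMax n f x} ≤ 5 ^ n * ∫⁻ y, f y := by
  rcases eq_or_ne (∫⁻ y, f y) ⊤ with hI | hI
  · rw [hI, ENNReal.mul_top (by positivity)]
    exact le_top
  have hex : ∀ x ∈ {x | lam < dyMax n f x}, ∃ k : ℤ,
      lam * volume (Metric.closedBall x ((2:ℝ) ^ k)) < ∫⁻ y in Metric.closedBall x ((2:ℝ) ^ k), f y := by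
    intro x hx
    obtain ⟨k, hk⟩ := lt_iSup_iff.1 (show lam < dyMax n f x from hx)
    exact ⟨k, ENNReal.mul_lt_of_lt_div hk⟩
  choose! k hk using hex
  have hv0 : volume (Metric.ball (0 : Rn n) 1) ≠ 0 := (Metric.measure_ball_pos volume _ one_pos).ne'
  have hvt : volume (Metric.ball (0 : Rn n) 1) ≠ ⊤ := measure_ball_lt_top.ne
  set R := (∫⁻ y, f y) / (lam * volume (Metric.ball (0 : Rn n) 1)) with hR
  have hRt : R ≠ ⊤ := ENNReal.div_ne_top hI (mul_ne_zero h0 hv0)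
  have hbd : ∀ x ∈ {x | lam < dyMax n f x}, (2:ℝ) ^ (k x) ≤ max 1 R.toReal := by
    intro x hx
    rcases le_total ((2:ℝ) ^ (k x)) 1 with h1 | h1
    · exact h1.trans (le_max_left _ _)
    refine le_trans ?_ (le_max_right _ _)
    rw [← ENNReal.ofReal_le_iff_le_toReal hRt, hR,
      ENNReal.le_div_iff_mul_le (Or.inl (mul_ne_zero h0 hv0)) (Or.inl (ENNReal.mul_ne_top ht hvt))]
    calc ENNReal.ofReal (2 ^ k x) * (lam * volume (Metric.ball (0 : Rn n) 1))
        ≤ ENNReal.ofReal ((2 ^ k x) ^ n) * (lam * volume (Metric.ball (0 : Rn n) 1)) := by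
          gcongr
          exact le_self_pow₀ h1 (by omega)
      _ = lam * volume (Metric.closedBall x ((2:ℝ) ^ (k x))) := by
          rw [volume_closedBall_Rn n x (by positivity)]; ring
      _ ≤ ∫⁻ y in Metric.closedBall x ((2:ℝ) ^ (k x)), f y := (hk x hx).le
      _ ≤ ∫⁻ y, f y := setLIntegral_le_lintegral _ _
  obtain ⟨u, hut, hud, huc⟩ := Vitali.exists_disjoint_subfamily_covering_enlargement_closedBall
    {x | lam < dyMax n f x} id (fun x => (2:ℝ) ^ (k x)) _ hbd 5 (by norm_num)
  have hucount : u.Countable := by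
    refine hud.countable_of_nonempty_interior fun x _ => ?_
    refine ⟨x, ?_⟩
    exact Metric.ball_subset_interior_closedBall (Metric.mem_ball_self (by positivity))
  have hcover : {x | lam < dyMax n f x} ⊆ ⋃ b ∈ u, Metric.closedBall b (5 * (2:ℝ) ^ (k b)) := by
    intro x hx
    obtain ⟨b, hb, hsub⟩ := huc x hx
    exact mem_biUnion hb (hsub (Metric.mem_closedBall_self (by positivity)))
  have := hucount.to_subtype
  calc lam * volume {x | lam < dyMax n f x}
      ≤ lam * ∑' b : u, volume (Metric.closedBall (b : Rn n) (5 * (2:ℝ) ^ (k b))) := by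
        gcongr
        exact (measure_mono hcover).trans (measure_biUnion_le volume hucount _)
    _ = ∑' b : u, 5 ^ n * (lam * volume (Metric.closedBall (b : Rn n) ((2:ℝ) ^ (k b)))) := by
        rw [← ENNReal.tsum_mul_left]
        congr 1
        ext b
        rw [volume_closedBall_Rn n _ (by positivity), volume_closedBall_Rn n _ (by positivity),
          mul_pow, ENNReal.ofReal_mul (by positivity), ENNReal.ofReal_pow (by norm_num),
          ENNReal.ofReal_ofNat]
        ring
    _ ≤ ∑' b : u, 5 ^ n * ∫⁻ y in Metric.closedBall (b : Rn n) ((2:ℝ) ^ (k b)), f y :=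
        ENNReal.tsum_le_tsum fun b => by
          gcongr
          exact (hk b (hut b.2)).le
    _ = 5 ^ n * ∫⁻ y in ⋃ b : u, Metric.closedBall (b : Rn n) ((2:ℝ) ^ (k b)), f y := by
        rw [ENNReal.tsum_mul_left, lintegral_iUnion (fun b => measurableSet_closedBall)]
        intro b c hbc
        exact hud b.2 c.2 (fun h => hbc (Subtype.ext h))
    _ ≤ 5 ^ n * ∫⁻ y, f y := by
        gcongr
        exact Measure.restrict_le_self

lemma lintegral_indicator_rpow {c : ℝ} (hc : 0 < c) (a : ℝ≥0∞) :
    ∫⁻ r in Ioi (0:ℝ), {r : ℝ | ENNReal.ofReal r < a}.indicator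
      (fun r => ENNReal.ofReal (r ^ (c - 1))) r = a ^ c / ENNReal.ofReal c := by
  rcases eq_or_ne a ⊤ with rfl | ha
  · have e : {r : ℝ | ENNReal.ofReal r < ⊤} = univ := by ext; simp
    rw [e, indicator_univ, ENNReal.top_rpow_of_pos hc, ENNReal.top_div_of_ne_top ENNReal.ofReal_ne_top]
    refine ENNReal.eq_top_of_forall_nnreal_le fun r => ?_
    set S : ℝ := (c * (r + 1)) ^ (1 / c) with hS
    have hS0 : 0 ≤ S := by positivity
    calc (r : ℝ≥0∞) = ENNReal.ofReal r := by simp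
      _ ≤ ENNReal.ofReal (r + 1) := ENNReal.ofReal_le_ofReal (by linarith)
      _ = ENNReal.ofReal (S ^ c / c) := by
          rw [hS, ← Real.rpow_mul (by positivity), one_div_mul_cancel hc.ne', Real.rpow_one]
          field_simp
      _ = ∫⁻ s in Ioc 0 S, ENNReal.ofReal (s ^ (c - 1)) := (lintegral_Ioc_rpow hc hS0).symm
      _ ≤ _ := lintegral_mono_set Ioc_subset_Ioi_self
  · have hm : MeasurableSet {r : ℝ | ENNReal.ofReal r < a} :=
      measurableSet_lt (by fun_prop) measurable_const
    rw [lintegral_indicator hm, Measure.restrict_restrict hm]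
    have e : {r : ℝ | ENNReal.ofReal r < a} ∩ Ioi 0 = Ioo 0 a.toReal := by
      ext r
      simp only [mem_inter_iff, mem_ofPred_eq, mem_Ioi, mem_Ioo]
      constructor
      · rintro ⟨h1, h2⟩
        exact ⟨h2, (ENNReal.ofReal_lt_iff_lt_toReal h2.le ha).1 h1⟩
      · rintro ⟨h1, h2⟩
        exact ⟨(ENNReal.ofReal_lt_iff_lt_toReal h1.le ha).2 h2, h1⟩
    rw [e, restrict_Ioo_eq_restrict_Ioc, lintegral_Ioc_rpow hc ENNReal.toReal_nonneg,
      ENNReal.ofReal_div_of_pos hc, ← ENNReal.ofReal_rpow_of_nonneg ENNReal.toReal_nonneg hc.le,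
      ENNReal.ofReal_toReal ha]

lemma exists_lintegral_dyMax_rpow_le {n : ℕ} (hn : 1 ≤ n) {s : ℝ} (hs : 1 < s) :
    ∃ C : ℝ≥0∞, C ≠ ⊤ ∧ ∀ f : Rn n → ℝ≥0∞, Measurable f →
      ∫⁻ x, dyMax n f x ^ s ≤ C * ∫⁻ x, f x ^ s := by
  have hs1 : 0 < s - 1 := by linarith
  have hs0 : 0 < s := by linarith
  refine ⟨ENNReal.ofReal s * (5 ^ n * 2 * (2 ^ (s - 1) / ENNReal.ofReal (s - 1))), ?_, fun f hf => ?_⟩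
  · have h1 : (2:ℝ≥0∞) ^ (s - 1) / ENNReal.ofReal (s - 1) ≠ ⊤ :=
      ENNReal.div_ne_top (ENNReal.rpow_ne_top_of_nonneg hs1.le (by simp)) (by simpa using hs1)
    have h5 : (5:ℝ≥0∞) ^ n ≠ ⊤ := by finiteness
    exact ENNReal.mul_ne_top ENNReal.ofReal_ne_top
      (ENNReal.mul_ne_top (ENNReal.mul_ne_top h5 (by simp)) h1)
  have hM := measurable_dyMax hf
  have hofm : Measurable (fun z : Rn n × ℝ => ENNReal.ofReal z.2) := by fun_prop
  have hS1 : MeasurableSet {z : Rn n × ℝ | ENNReal.ofReal z.2 < dyMax n f z.1} :=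
    measurableSet_lt hofm (hM.comp measurable_fst)
  have hS2 : MeasurableSet {z : Rn n × ℝ | ENNReal.ofReal z.2 < 2 * f z.1} :=
    measurableSet_lt hofm ((hf.comp measurable_fst).const_mul 2)
  have hweak : ∀ r ∈ Ioi (0:ℝ), volume {x | ENNReal.ofReal r < dyMax n f x}
      ≤ 5 ^ n * (∫⁻ x, {x | ENNReal.ofReal r < 2 * f x}.indicator f x) / ENNReal.ofReal (r / 2) := by
    intro r hr
    have hr2 : 0 < r / 2 := half_pos hr
    set lam := ENNReal.ofReal (r / 2) with hlam
    have h2 : ENNReal.ofReal r = lam + lam := by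
      rw [hlam, ← ENNReal.ofReal_add hr2.le hr2.le]; ring_nf
    have hl0 : lam ≠ 0 := by simpa [hlam] using hr
    rw [ENNReal.le_div_iff_mul_le (Or.inl hl0) (Or.inl ENNReal.ofReal_ne_top), mul_comm]
    refine le_trans ?_ (mul_volume_dyMax_le hn _ hl0 ENNReal.ofReal_ne_top)
    refine mul_le_mul' le_rfl (measure_mono ?_)
    intro x hx
    have h3 := dyMax_le_add_const (f := f)
      (g := {x | ENNReal.ofReal r < 2 * f x}.indicator f) (c := lam) (fun y => by
        by_cases hy : ENNReal.ofReal r < 2 * f y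
        · rw [indicator_of_mem (by exact hy)]
          exact le_self_add
        · rw [not_lt, h2, ← two_mul] at hy
          exact le_add_left ((ENNReal.mul_le_mul_iff_right two_ne_zero (by simp)).1 hy)) x
    have h4 : lam + lam < dyMax n f x := by rw [← h2]; exact hx
    exact (ENNReal.add_lt_add_iff_right ENNReal.ofReal_ne_top).1 (h4.trans_le h3)
  calc ∫⁻ x, dyMax n f x ^ s
      = ∫⁻ x, ENNReal.ofReal s * ∫⁻ r in Ioi (0:ℝ), {r : ℝ | ENNReal.ofReal r < dyMax n f x}.indicator
          (fun r => ENNReal.ofReal (r ^ (s - 1))) r := by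
        congr 1; ext x
        rw [lintegral_indicator_rpow hs0, ENNReal.mul_div_cancel (by simpa using hs0) ENNReal.ofReal_ne_top]
    _ = ENNReal.ofReal s * ∫⁻ x, ∫⁻ r in Ioi (0:ℝ),
          {z : Rn n × ℝ | ENNReal.ofReal z.2 < dyMax n f z.1}.indicator
          (fun z => ENNReal.ofReal (z.2 ^ (s - 1))) (x, r) := lintegral_const_mul' _ _ ENNReal.ofReal_ne_top
    _ = ENNReal.ofReal s * ∫⁻ r in Ioi (0:ℝ), ∫⁻ x,
          {z : Rn n × ℝ | ENNReal.ofReal z.2 < dyMax n f z.1}.indicator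
          (fun z => ENNReal.ofReal (z.2 ^ (s - 1))) (x, r) := by
        congr 1
        exact lintegral_lintegral_swap (Measurable.indicator (by fun_prop) hS1).aemeasurable
    _ ≤ ENNReal.ofReal s * ∫⁻ r in Ioi (0:ℝ), ∫⁻ x, 5 ^ n * 2 *
          {z : Rn n × ℝ | ENNReal.ofReal z.2 < 2 * f z.1}.indicator
          (fun z => ENNReal.ofReal (z.2 ^ (s - 1 - 1)) * f z.1) (x, r) := by
        gcongr ENNReal.ofReal s * ?_
        refine setLIntegral_mono' measurableSet_Ioi fun r hr => ?_
        have hr' : (0:ℝ) < r := hr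
        have e1 : ∫⁻ x, {z : Rn n × ℝ | ENNReal.ofReal z.2 < dyMax n f z.1}.indicator
            (fun z => ENNReal.ofReal (z.2 ^ (s - 1))) (x, r)
            = ENNReal.ofReal (r ^ (s - 1)) * volume {x | ENNReal.ofReal r < dyMax n f x} := by
          rw [← lintegral_indicator_const (measurableSet_lt measurable_const hM)]
          rfl
        have e2 : ∫⁻ x, 5 ^ n * 2 * {z : Rn n × ℝ | ENNReal.ofReal z.2 < 2 * f z.1}.indicator
            (fun z => ENNReal.ofReal (z.2 ^ (s - 1 - 1)) * f z.1) (x, r)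
            = 5 ^ n * 2 * (ENNReal.ofReal (r ^ (s - 1 - 1)) *
              ∫⁻ x, {x | ENNReal.ofReal r < 2 * f x}.indicator f x) := by
          rw [lintegral_const_mul' _ _ (by finiteness)]
          rw [← lintegral_const_mul' _ _ ENNReal.ofReal_ne_top]
          congr 2
          ext x
          by_cases hx : ENNReal.ofReal r < 2 * f x
          · rw [indicator_of_mem (by exact hx), indicator_of_mem (by exact hx)]
          · rw [indicator_of_notMem (by exact hx), indicator_of_notMem (by exact hx), mul_zero]
        rw [e1, e2]
        refine (mul_le_mul_right (hweak r hr) _).trans_eq ?_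
        have e3 : ENNReal.ofReal (r ^ (s - 1)) = 2 * ENNReal.ofReal (r ^ (s - 1 - 1)) *
            ENNReal.ofReal (r / 2) := by
          rw [← ENNReal.ofReal_ofNat, ← ENNReal.ofReal_mul (by norm_num),
            ← ENNReal.ofReal_mul (by positivity), Real.rpow_sub_one hr'.ne' (s - 1)]
          congr 1
          field_simp
        have hr0 : ENNReal.ofReal (r / 2) ≠ 0 := by simpa using hr'
        rw [e3, mul_div_assoc, mul_assoc, ← mul_div_assoc (5 ^ n), ENNReal.mul_div_cancel hr0 ENNReal.ofReal_ne_top]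
        ring
    _ = ENNReal.ofReal s * ∫⁻ x, ∫⁻ r in Ioi (0:ℝ), 5 ^ n * 2 *
          {z : Rn n × ℝ | ENNReal.ofReal z.2 < 2 * f z.1}.indicator
          (fun z => ENNReal.ofReal (z.2 ^ (s - 1 - 1)) * f z.1) (x, r) := by
        congr 1
        exact lintegral_lintegral_swap (f := fun r x => 5 ^ n * 2 *
          {z : Rn n × ℝ | ENNReal.ofReal z.2 < 2 * f z.1}.indicator
          (fun z => ENNReal.ofReal (z.2 ^ (s - 1 - 1)) * f z.1) (x, r))
          (((Measurable.indicator (by fun_prop) hS2).comp measurable_swap).const_mul _).aemeasurable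
    _ = ENNReal.ofReal s * ∫⁻ x, 5 ^ n * 2 * (2 ^ (s - 1) / ENNReal.ofReal (s - 1)) * f x ^ s := by
        congr 2
        ext x
        have e : ∀ r : ℝ, {z : Rn n × ℝ | ENNReal.ofReal z.2 < 2 * f z.1}.indicator
          (fun z => ENNReal.ofReal (z.2 ^ (s - 1 - 1)) * f z.1) (x, r)
          = {r : ℝ | ENNReal.ofReal r < 2 * f x}.indicator
          (fun r => ENNReal.ofReal (r ^ (s - 1 - 1))) r * f x := by
          intro r
          by_cases hx : ENNReal.ofReal r < 2 * f x
          · rw [indicator_of_mem (by exact hx), indicator_of_mem (by exact hx)]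
          · rw [indicator_of_notMem (by exact hx), indicator_of_notMem (by exact hx), zero_mul]
        simp only [e]
        rw [lintegral_const_mul' _ _ (by finiteness), lintegral_mul_const _
          (Measurable.indicator (by fun_prop) (measurableSet_lt (by fun_prop) measurable_const)),
          lintegral_indicator_rpow hs1, ENNReal.mul_rpow_of_nonneg _ _ hs1.le, mul_assoc (5 ^ n * 2)]
        congr 1
        have e4 : f x ^ s = f x ^ (s - 1) * f x := by
          conv_rhs => rw [← ENNReal.rpow_one (f x), ← ENNReal.rpow_mul, one_mul]
          rw [← ENNReal.rpow_add_of_nonneg _ _ hs1.le zero_le_one]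
          ring_nf
        rw [e4, div_eq_mul_inv, div_eq_mul_inv]
        ring
    _ = _ := by
        rw [lintegral_const_mul _ (by fun_prop)]
        ring

lemma lintegral_rpow_le_lintegral_rpow {E : Type*} [MeasurableSpace E] (ν : Measure E)
    [IsProbabilityMeasure ν] {g : E → ℝ≥0∞} (hg : AEMeasurable g ν) {s : ℝ} (hs : 1 ≤ s) :
    (∫⁻ y, g y ∂ν) ^ s ≤ ∫⁻ y, g y ^ s ∂ν := by
  have h := eLpNorm'_le_eLpNorm'_of_exponent_le one_pos hs ν hg.aestronglyMeasurable
  simp only [eLpNorm', enorm_eq_self, ENNReal.rpow_one, div_one] at h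
  rw [one_div] at h
  exact (ENNReal.le_rpow_inv_iff (by linarith)).1 h

/-- The weight `(e + ‖x‖)⁻ⁿ` measuring the decay error of a log-Hölder exponent. -/
def decayWeight (n : ℕ) (x : Rn n) : ℝ≥0∞ := ENNReal.ofReal ((Real.exp 1 + ‖x‖) ^ (-(n:ℝ)))

lemma measurable_decayWeight (n : ℕ) : Measurable (decayWeight n) := by
  unfold decayWeight; fun_prop

lemma one_le_log_exp_one_add {r : ℝ} (hr : 0 ≤ r) : 1 ≤ Real.log (Real.exp 1 + r) := by
  have h := Real.log_le_log (Real.exp_pos 1) (le_add_of_nonneg_right hr)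
  rwa [Real.log_exp] at h

lemma rpow_le_exp_mul_rpow_add (n : ℕ) (x : Rn n) {a : ℝ≥0∞} (ha : a ≤ 1) {s t Q c : ℝ} (hs : 1 ≤ s)
    (ht : 1 ≤ t) (hQ : t ≤ Q) (hc : 0 ≤ c)
    (h : 1 / s - 1 / t ≤ c / Real.log (Real.exp 1 + ‖x‖)) :
    a ^ s ≤ ENNReal.ofReal (Real.exp (n * (Q * c))) * a ^ t + decayWeight n x := by
  have hat : a ≠ ⊤ := (ha.trans_lt ENNReal.one_lt_top).ne
  obtain ⟨a, ha0, rfl⟩ : ∃ a' : ℝ, 0 ≤ a' ∧ a = ENNReal.ofReal a' :=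
    ⟨a.toReal, ENNReal.toReal_nonneg, (ENNReal.ofReal_toReal hat).symm⟩
  have ha1 : a ≤ 1 := by simpa using ha
  rw [decayWeight, ENNReal.ofReal_rpow_of_nonneg ha0 (by linarith),
    ENNReal.ofReal_rpow_of_nonneg ha0 (by linarith), ← ENNReal.ofReal_mul (by positivity),
    ← ENNReal.ofReal_add (by positivity) (by positivity)]
  refine ENNReal.ofReal_le_ofReal ?_
  have hL := one_le_log_exp_one_add (norm_nonneg x)
  have hepos : 0 < Real.exp 1 + ‖x‖ := by positivity
  by_cases h1 : a ^ s ≤ (Real.exp 1 + ‖x‖) ^ (-(n:ℝ))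
  · have : 0 ≤ Real.exp (n * (Q * c)) * a ^ t := by positivity
    linarith
  push Not at h1
  have hap : 0 < a := by
    rcases ha0.eq_or_lt with h0 | h0
    · rw [← h0, Real.zero_rpow (by linarith)] at h1
      exact absurd h1 (not_lt.2 (by positivity))
    · exact h0
  have hlog : -(n * Real.log (Real.exp 1 + ‖x‖)) < s * Real.log a := by
    have := Real.log_lt_log (by positivity) h1
    rw [Real.log_rpow hepos, Real.log_rpow hap] at this
    linarith
  have hla : Real.log a ≤ 0 := Real.log_nonpos ha0 ha1
  have key : a ^ s ≤ Real.exp (n * (Q * c)) * a ^ t := by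
    rw [Real.rpow_def_of_pos hap, Real.rpow_def_of_pos hap, ← Real.exp_add]
    refine Real.exp_le_exp.2 ?_
    rcases le_total t s with hts | hts
    · have : 0 ≤ n * (Q * c) := by
        have : 0 ≤ Q := by linarith
        positivity
      nlinarith
    have h2 : t - s ≤ s * (t * (c / Real.log (Real.exp 1 + ‖x‖))) := by
      have e : t - s = s * (t * (1 / s - 1 / t)) := by
        field_simp
      rw [e]
      gcongr
    set L := Real.log (Real.exp 1 + ‖x‖)
    have hLpos : 0 < L := by linarith
    have h3 : (t - s) * (-Real.log a) ≤ (s * (t * (c / L))) * (-Real.log a) := by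
      gcongr; linarith
    have h4 : (s * (t * (c / L))) * (-Real.log a) = (t * (c / L)) * (-(s * Real.log a)) := by ring
    have h5 : (t * (c / L)) * (-(s * Real.log a)) ≤ (t * (c / L)) * (n * L) := by
      gcongr; linarith
    have h6 : (t * (c / L)) * (n * L) = n * (t * c) := by field_simp
    have h7 : n * (t * c) ≤ n * (Q * c) := by gcongr
    nlinarith
  have : 0 ≤ (Real.exp 1 + ‖x‖) ^ (-(n:ℝ)) := by positivity
  linarith

lemma inv_volume_closedBall_rpow_le (n : ℕ) (x : Rn n) {r θ c : ℝ} (hr : 0 < r) (hθ : 0 ≤ θ)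
    (hθc : θ ≤ c / Real.log (Real.exp 1 + 1 / r)) :
    (volume (Metric.closedBall x r))⁻¹ ^ θ
      ≤ (1 + (volume (Metric.ball (0 : Rn n) 1))⁻¹) ^ c * ENNReal.ofReal (Real.exp (n * c)) := by
  have hL := one_le_log_exp_one_add (one_div_pos.2 hr).le
  have hc : 0 ≤ c := by
    by_contra hc
    push Not at hc
    have := div_neg_of_neg_of_pos hc (by linarith : 0 < Real.log (Real.exp 1 + 1 / r))
    linarith
  have hθc' : θ ≤ c := hθc.trans (div_le_self hc hL)
  have hpos : 0 < Real.exp 1 + 1 / r := by positivity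
  have h1 : (volume (Metric.closedBall x r))⁻¹
      ≤ (1 + (volume (Metric.ball (0 : Rn n) 1))⁻¹) * ENNReal.ofReal ((Real.exp 1 + 1 / r) ^ n) := by
    rw [volume_closedBall_Rn n x hr.le, ENNReal.mul_inv (Or.inr measure_ball_lt_top.ne)
      (Or.inl ENNReal.ofReal_ne_top), mul_comm, ← ENNReal.ofReal_inv_of_pos (by positivity)]
    gcongr
    · exact le_add_self
    · rw [← inv_pow]
      gcongr
      rw [one_div]
      have := Real.exp_pos 1
      linarith
  calc (volume (Metric.closedBall x r))⁻¹ ^ θ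
      ≤ ((1 + (volume (Metric.ball (0 : Rn n) 1))⁻¹)
          * ENNReal.ofReal ((Real.exp 1 + 1 / r) ^ n)) ^ θ := by gcongr
    _ = (1 + (volume (Metric.ball (0 : Rn n) 1))⁻¹) ^ θ
          * ENNReal.ofReal (((Real.exp 1 + 1 / r) ^ n) ^ θ) := by
        rw [ENNReal.mul_rpow_of_nonneg _ _ hθ, ENNReal.ofReal_rpow_of_nonneg (by positivity) hθ]
    _ ≤ _ := by
        gcongr
        · exact le_self_add
        · rw [← Real.rpow_natCast, ← Real.rpow_mul hpos.le, Real.rpow_def_of_pos hpos]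
          refine Real.exp_le_exp.2 ?_
          rw [le_div_iff₀ (by linarith)] at hθc
          have : (0:ℝ) ≤ n := by positivity
          nlinarith

lemma lintegral_large_rpow_le {n : ℕ} {q : Rn n → ℝ} {Q c : ℝ}
    (hq1 : ∀ x, 1 ≤ q x) (hqQ : ∀ x, q x ≤ Q) (hc : 0 ≤ c)
    (hloc : ∀ x y, x ≠ y → |1 / q x - 1 / q y| ≤ c / Real.log (Real.exp 1 + 1 / ‖x - y‖))
    {g : Rn n → ℝ≥0∞} (hg : Measurable g) (hg1 : ∀ y, g y = 0 ∨ 1 ≤ g y)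
    (hf_le : ∫⁻ y, g y ^ q y ≤ 1) (x : Rn n) {r : ℝ} (hr : 0 < r) :
    (∫⁻ y, g y ∂ProbabilityTheory.cond volume (Metric.closedBall x r)) ^ q x
      ≤ (1 + (volume (Metric.ball (0 : Rn n) 1))⁻¹) ^ (Q * c) * ENNReal.ofReal (Real.exp (n * (Q * c)))
        * ∫⁻ y, g y ^ q y ∂ProbabilityTheory.cond volume (Metric.closedBall x r) := by
  set B := Metric.closedBall x r with hB
  have hprob : IsProbabilityMeasure (ProbabilityTheory.cond volume B) :=
    ProbabilityTheory.cond_isProbabilityMeasure_of_finite (volume_closedBall_ne_zero n x hr)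
      (volume_closedBall_ne_top n x r)
  set ν := ProbabilityTheory.cond volume B with hν
  set L := Real.log (Real.exp 1 + 1 / r) with hLdef
  have hL : 1 ≤ L := one_le_log_exp_one_add (one_div_pos.2 hr).le
  have hcL : 0 ≤ c / L := by positivity
  have hq0 : ∀ y, 0 < q y := fun y => by linarith [hq1 y]
  set m : ℝ := 1 / min 1 (1 / q x + c / L) with hm
  have hmin : 0 < min 1 (1 / q x + c / L) := by
    have := hq0 x
    refine lt_min one_pos (by positivity)
  have hm1 : 1 ≤ m := by
    rw [hm, le_div_iff₀ hmin, one_mul]; exact min_le_left _ _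
  have hm0 : 0 < m := by linarith
  have hmB : ∀ y ∈ B, m ≤ q y := by
    intro y hy
    have h1 : 1 / q y ≤ min 1 (1 / q x + c / L) := by
      refine le_min ?_ ?_
      · rw [div_le_one (hq0 y)]; exact hq1 y
      · rcases eq_or_ne x y with rfl | hxy
        · linarith
        · have h2 := (abs_le.1 (hloc x y hxy)).1
          have hd : 0 < ‖x - y‖ := norm_pos_iff.2 (sub_ne_zero.2 hxy)
          have hdr : ‖x - y‖ ≤ r := by
            rw [← dist_eq_norm, dist_comm]; exact Metric.mem_closedBall.1 hy
          have h3 : c / Real.log (Real.exp 1 + 1 / ‖x - y‖) ≤ c / L := by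
            rw [hLdef]
            gcongr
          linarith
    rw [hm, div_le_comm₀ hmin (hq0 y)]
    exact h1
  have hmx : m ≤ q x := hmB x (Metric.mem_closedBall_self hr.le)
  have hθ : (q x - m) / m ≤ Q * c / L := by
    have h1 : 1 / m ≤ 1 / q x + c / L := by
      rw [hm, one_div_one_div]; exact min_le_right _ _
    have e : (q x - m) / m = q x * (1 / m - 1 / q x) := by
      have := hq0 x
      field_simp
    rw [e, mul_div_assoc]
    exact (mul_le_mul_of_nonneg_left (by linarith) (hq0 x).le).trans
      (mul_le_mul_of_nonneg_right (hqQ x) hcL)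
  have hpow : ∀ y ∈ B, g y ^ m ≤ g y ^ q y := by
    intro y hy
    rcases hg1 y with h | h
    · rw [h, ENNReal.zero_rpow_of_pos hm0, ENNReal.zero_rpow_of_pos (hq0 y)]
    · exact ENNReal.rpow_le_rpow_of_exponent_le h (hmB y hy)
  have hA : (∫⁻ y, g y ∂ν) ^ m ≤ ∫⁻ y, g y ^ q y ∂ν := by
    refine (lintegral_rpow_le_lintegral_rpow ν hg.aemeasurable hm1).trans ?_
    refine lintegral_mono_ae ?_
    have h1 : ∀ᵐ y ∂ν, y ∈ B := ProbabilityTheory.ae_cond_mem measurableSet_closedBall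
    filter_upwards [h1] with y hy using hpow y hy
  have hV : ∫⁻ y, g y ^ q y ∂ν ≤ (volume B)⁻¹ := by
    rw [hν, ProbabilityTheory.cond, lintegral_smul_measure, smul_eq_mul]
    calc (volume B)⁻¹ * ∫⁻ y in B, g y ^ q y ≤ (volume B)⁻¹ * 1 := by
          gcongr
          exact (setLIntegral_le_lintegral _ _).trans hf_le
      _ = _ := mul_one _
  have e : q x = m + m * ((q x - m) / m) := by field_simp; ring
  have hθ0 : 0 ≤ (q x - m) / m := div_nonneg (by linarith) hm0.le
  calc (∫⁻ y, g y ∂ν) ^ q x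
      = (∫⁻ y, g y ∂ν) ^ m * ((∫⁻ y, g y ∂ν) ^ m) ^ ((q x - m) / m) := by
        conv_lhs => rw [e, ENNReal.rpow_add_of_nonneg _ _ hm0.le (by positivity), ENNReal.rpow_mul]
    _ ≤ (∫⁻ y, g y ^ q y ∂ν) * ((volume B)⁻¹) ^ ((q x - m) / m) := by
        gcongr
        exact hA.trans hV
    _ ≤ _ := by
        rw [mul_comm]
        gcongr
        exact inv_volume_closedBall_rpow_le n x hr hθ0 hθ

lemma exists_cond_lintegral_rpow_le {n : ℕ} {q : Rn n → ℝ} {Q c u s : ℝ}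
    (hq1 : ∀ x, 1 ≤ q x) (hqQ : ∀ x, q x ≤ Q) (hc : 0 ≤ c) (hs : 1 ≤ s) (hu : 1 ≤ u) (huQ : u ≤ Q)
    (hloc : ∀ x y, x ≠ y → |1 / q x - 1 / q y| ≤ c / Real.log (Real.exp 1 + 1 / ‖x - y‖))
    (hinf : ∀ x, |1 / q x - 1 / u| ≤ c / Real.log (Real.exp 1 + ‖x‖)) :
    ∃ K : ℝ≥0∞, K ≠ ⊤ ∧ ∀ f : Rn n → ℝ≥0∞, Measurable f → ∫⁻ y, f y ^ (s * q y) ≤ 1 →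
      ∀ x r, 0 < r → (∫⁻ y, f y ∂ProbabilityTheory.cond volume (Metric.closedBall x r)) ^ q x
        ≤ K * (∫⁻ y, f y ^ q y ∂ProbabilityTheory.cond volume (Metric.closedBall x r)
          + ∫⁻ y, decayWeight n y ∂ProbabilityTheory.cond volume (Metric.closedBall x r)
          + decayWeight n x) := by
  set K₁ : ℝ≥0∞ := (1 + (volume (Metric.ball (0 : Rn n) 1))⁻¹) ^ (Q * c)
    * ENNReal.ofReal (Real.exp (n * (Q * c))) with hK₁
  set K₂ : ℝ≥0∞ := ENNReal.ofReal (Real.exp (n * (Q * c))) with hK₂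
  have hQ0 : 0 ≤ Q := by linarith
  have hK₂t : K₂ ≠ ⊤ := ENNReal.ofReal_ne_top
  have hK₁t : K₁ ≠ ⊤ := by
    refine ENNReal.mul_ne_top (ENNReal.rpow_ne_top_of_nonneg (by positivity) ?_) hK₂t
    exact ENNReal.add_ne_top.2 ⟨by simp, ENNReal.inv_ne_top.2
      (Metric.measure_ball_pos volume _ one_pos).ne'⟩
  have h2Q : (2:ℝ≥0∞) ^ Q ≠ ⊤ := ENNReal.rpow_ne_top_of_nonneg hQ0 (by simp)
  refine ⟨2 ^ Q * (K₁ + K₂ * K₂ + K₂ + 1), ?_, fun f hf hf_le x r hr => ?_⟩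
  · exact ENNReal.mul_ne_top h2Q (by finiteness)
  have hprob : IsProbabilityMeasure (ProbabilityTheory.cond volume (Metric.closedBall x r)) :=
    ProbabilityTheory.cond_isProbabilityMeasure_of_finite (volume_closedBall_ne_zero n x hr)
      (volume_closedBall_ne_top n x r)
  set ν := ProbabilityTheory.cond volume (Metric.closedBall x r) with hν
  set I := ∫⁻ y, f y ^ q y ∂ν with hI
  set W := ∫⁻ y, decayWeight n y ∂ν with hW
  have hq0 : ∀ y, 0 < q y := fun y => by linarith [hq1 y]
  set T : Set (Rn n) := {y | 1 < f y} with hT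
  have hTm : MeasurableSet T := measurableSet_lt measurable_const hf
  set g := T.indicator f with hg
  set l := Tᶜ.indicator f with hl
  have hgm : Measurable g := hf.indicator hTm
  have hlm : Measurable l := hf.indicator hTm.compl
  have hgf : ∀ y, g y ≤ f y := fun y => indicator_le_self _ _ y
  have hlf : ∀ y, l y ≤ f y := fun y => indicator_le_self _ _ y
  have hg1 : ∀ y, g y = 0 ∨ 1 ≤ g y := by
    intro y
    by_cases hy : y ∈ T
    · right; rw [hg, indicator_of_mem hy]; exact le_of_lt hy
    · left; rw [hg, indicator_of_notMem hy]
  have hl1 : ∀ y, l y ≤ 1 := by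
    intro y
    by_cases hy : y ∈ Tᶜ
    · rw [hl, indicator_of_mem hy]; exact not_lt.1 hy
    · rw [hl, indicator_of_notMem hy]; exact zero_le_one
  have hgint : ∫⁻ y, g y ^ q y ≤ 1 := by
    refine le_trans (lintegral_mono fun y => ?_) hf_le
    rcases hg1 y with h | h
    · rw [h, ENNReal.zero_rpow_of_pos (hq0 y)]; exact zero_le
    · calc g y ^ q y ≤ g y ^ (s * q y) :=
            ENNReal.rpow_le_rpow_of_exponent_le h (by nlinarith [hq0 y])
        _ ≤ _ := ENNReal.rpow_le_rpow (hgf y) (by nlinarith [hq0 y])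
  have hlarge : (∫⁻ y, g y ∂ν) ^ q x ≤ K₁ * I := by
    refine (lintegral_large_rpow_le hq1 hqQ hc hloc hgm hg1 hgint x hr).trans ?_
    refine mul_le_mul' le_rfl (lintegral_mono fun y => ?_)
    exact ENNReal.rpow_le_rpow (hgf y) (hq0 y).le
  have hsmall : (∫⁻ y, l y ∂ν) ^ q x ≤ K₂ * (K₂ * I + W) + decayWeight n x := by
    have h1 : ∫⁻ y, l y ∂ν ≤ 1 := by
      refine (lintegral_mono hl1).trans ?_
      simp
    refine (rpow_le_exp_mul_rpow_add n x h1 (hq1 x) hu huQ hc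
      ((le_abs_self _).trans (hinf x))).trans ?_
    gcongr
    refine (lintegral_rpow_le_lintegral_rpow ν hlm.aemeasurable hu).trans ?_
    calc ∫⁻ y, l y ^ u ∂ν ≤ ∫⁻ y, (K₂ * f y ^ q y + decayWeight n y) ∂ν := by
          refine lintegral_mono fun y => ?_
          refine (rpow_le_exp_mul_rpow_add n y (hl1 y) hu (hq1 y) (hqQ y) hc
            ((le_abs_self _).trans ((abs_sub_comm _ _).trans_le (hinf y)))).trans ?_
          gcongr
          · exact (hq0 y).le
          · exact hlf y
      _ = K₂ * I + W := by
          rw [lintegral_add_right _ (measurable_decayWeight n), lintegral_const_mul' _ _ hK₂t]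
  have hsplit : ∫⁻ y, f y ∂ν = ∫⁻ y, g y ∂ν + ∫⁻ y, l y ∂ν := by
    rw [← lintegral_add_left hgm]
    congr 1
    ext y
    exact (indicator_self_add_compl_apply T f y).symm
  calc (∫⁻ y, f y ∂ν) ^ q x
      ≤ 2 ^ (q x - 1) * ((∫⁻ y, g y ∂ν) ^ q x + (∫⁻ y, l y ∂ν) ^ q x) := by
        rw [hsplit]
        exact ENNReal.rpow_add_le_mul_rpow_add_rpow _ _ (hq1 x)
    _ ≤ 2 ^ Q * (K₁ * I + (K₂ * (K₂ * I + W) + decayWeight n x)) := by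
        gcongr
        · exact one_le_two
        · linarith [hqQ x]
    _ ≤ 2 ^ Q * ((K₁ + K₂ * K₂ + K₂ + 1) * (I + W + decayWeight n x)) := by
        gcongr
        set D := decayWeight n x
        calc K₁ * I + (K₂ * (K₂ * I + W) + D)
            ≤ (K₁ * I + (K₂ * (K₂ * I + W) + D)) + (K₁ * (W + D) + K₂ * K₂ * (W + D)
              + K₂ * (I + D) + (I + W)) := le_self_add
          _ = _ := by ring
    _ = _ := by rw [mul_assoc]

lemma dyMax_eq_iSup_cond {n : ℕ} (f : Rn n → ℝ≥0∞) (x : Rn n) :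
    dyMax n f x = ⨆ k : ℤ, ∫⁻ y, f y ∂ProbabilityTheory.cond volume
      (Metric.closedBall x ((2:ℝ) ^ k)) := by
  simp only [dyMax, ProbabilityTheory.cond, lintegral_smul_measure, smul_eq_mul, div_eq_mul_inv,
    mul_comm]

lemma lintegral_decayWeight_rpow_ne_top (n : ℕ) (hn : 1 ≤ n) {s : ℝ} (hs : 1 < s) :
    ∫⁻ x, decayWeight n x ^ s ≠ ⊤ := by
  have hn0 : (1:ℝ) ≤ n := by exact_mod_cast hn
  have h := integrable_one_add_norm (E := Rn n) (μ := volume) (r := n * s)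
    (by rw [finrank_euclideanSpace_fin]; nlinarith)
  refine ne_top_of_le_ne_top h.lintegral_lt_top.ne (lintegral_mono fun x => ?_)
  rw [decayWeight, ENNReal.ofReal_rpow_of_nonneg (by positivity) (by linarith),
    ← Real.rpow_mul (by positivity)]
  refine ENNReal.ofReal_le_ofReal ?_
  rw [neg_mul]
  refine Real.rpow_le_rpow_of_nonpos (by positivity) ?_ (by nlinarith)
  have := Real.add_one_le_exp 1
  linarith

lemma exists_lintegral_dyMax_varExp_le {n : ℕ} (hn : 1 ≤ n) {q : Rn n → ℝ} (hq : Measurable q)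
    {Q c u s : ℝ} (hq1 : ∀ x, 1 ≤ q x) (hqQ : ∀ x, q x ≤ Q) (hc : 0 ≤ c) (hs : 1 < s)
    (hu : 1 ≤ u) (huQ : u ≤ Q)
    (hloc : ∀ x y, x ≠ y → |1 / q x - 1 / q y| ≤ c / Real.log (Real.exp 1 + 1 / ‖x - y‖))
    (hinf : ∀ x, |1 / q x - 1 / u| ≤ c / Real.log (Real.exp 1 + ‖x‖)) :
    ∃ C : ℝ≥0∞, C ≠ ⊤ ∧ ∀ f : Rn n → ℝ≥0∞, Measurable f → ∫⁻ y, f y ^ (s * q y) ≤ 1 →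
      ∫⁻ x, dyMax n f x ^ (s * q x) ≤ C := by
  obtain ⟨K, hK, hball⟩ := exists_cond_lintegral_rpow_le hq1 hqQ hc hs.le hu huQ hloc hinf
  obtain ⟨A, hA, hmax⟩ := exists_lintegral_dyMax_rpow_le hn hs
  set D := ∫⁻ x, decayWeight n x ^ s with hD
  have hDt : D ≠ ⊤ := lintegral_decayWeight_rpow_ne_top n hn hs
  have hs0 : 0 < s := by linarith
  have h2t : (2:ℝ≥0∞) ^ (s - 1) ≠ ⊤ := ENNReal.rpow_ne_top_of_nonneg (by linarith) (by simp)
  have hKs : K ^ s ≠ ⊤ := ENNReal.rpow_ne_top_of_nonneg hs0.le hK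
  refine ⟨K ^ s * (2 ^ (s - 1) * (2 ^ (s - 1) * (A + A * D) + D)), by finiteness,
    fun f hf hf_le => ?_⟩
  have hq0 : ∀ y, 0 < q y := fun y => by linarith [hq1 y]
  have hfq : Measurable (fun y => f y ^ q y) := hf.pow hq
  have hpt : ∀ x, dyMax n f x ^ q x ≤ K * (dyMax n (fun y => f y ^ q y) x
      + dyMax n (decayWeight n) x + decayWeight n x) := by
    intro x
    rw [← ENNReal.le_rpow_inv_iff (hq0 x), dyMax_eq_iSup_cond f]
    refine iSup_le fun k => ?_
    rw [ENNReal.le_rpow_inv_iff (hq0 x)]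
    refine (hball f hf hf_le x _ (by positivity)).trans ?_
    rw [dyMax_eq_iSup_cond, dyMax_eq_iSup_cond]
    gcongr
    · exact le_iSup (fun k : ℤ => ∫⁻ y, f y ^ q y ∂ProbabilityTheory.cond volume
        (Metric.closedBall x ((2:ℝ) ^ k))) k
    · exact le_iSup (fun k : ℤ => ∫⁻ y, decayWeight n y ∂ProbabilityTheory.cond volume
        (Metric.closedBall x ((2:ℝ) ^ k))) k
  have hmw := measurable_decayWeight n
  calc ∫⁻ x, dyMax n f x ^ (s * q x)
      ≤ ∫⁻ x, K ^ s * (2 ^ (s - 1) * (2 ^ (s - 1) * (dyMax n (fun y => f y ^ q y) x ^ s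
          + dyMax n (decayWeight n) x ^ s) + decayWeight n x ^ s)) := by
        refine lintegral_mono fun x => ?_
        rw [mul_comm s, ENNReal.rpow_mul]
        refine (ENNReal.rpow_le_rpow (hpt x) hs0.le).trans ?_
        rw [ENNReal.mul_rpow_of_nonneg _ _ hs0.le]
        gcongr
        refine (ENNReal.rpow_add_le_mul_rpow_add_rpow _ _ hs.le).trans ?_
        gcongr
        exact ENNReal.rpow_add_le_mul_rpow_add_rpow _ _ hs.le
    _ = K ^ s * (2 ^ (s - 1) * (2 ^ (s - 1) * ((∫⁻ x, dyMax n (fun y => f y ^ q y) x ^ s)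
          + ∫⁻ x, dyMax n (decayWeight n) x ^ s) + D)) := by
        rw [lintegral_const_mul' _ _ hKs, lintegral_const_mul' _ _ h2t,
          lintegral_add_right _ (hmw.pow_const s), lintegral_const_mul' _ _ h2t,
          lintegral_add_right _ ((measurable_dyMax hmw).pow_const s)]
    _ ≤ _ := by
        gcongr
        · refine (hmax _ hfq).trans ?_
          calc A * ∫⁻ y, (f y ^ q y) ^ s = A * ∫⁻ y, f y ^ (s * q y) := by
                simp only [← ENNReal.rpow_mul, mul_comm]
            _ ≤ A * 1 := by gcongr
            _ = A := mul_one A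
        · exact hmax _ hmw

/-- Global log-Hölder continuity of the reciprocal of an exponent on `ℝⁿ`. -/
def LogHolder (n : ℕ) (p : Rn n → ℝ) : Prop :=
  ∃ c ≥ (0:ℝ), ∃ u : ℝ,
    (∀ x y, x ≠ y → |1 / p x - 1 / p y| ≤ c / Real.log (Real.exp 1 + 1 / ‖x - y‖)) ∧
    (∀ x, |1 / p x - u| ≤ c / Real.log (Real.exp 1 + ‖x‖))

lemma IsPLog.logHolder_div {n : ℕ} {p : Rn n → ℝ} (hp : IsPLog univ p) {a : ℝ} (ha : 0 < a) :
    LogHolder n (fun x => p x / a) := by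
  obtain ⟨-, -, C₁, hC₁, C₂, hC₂, u, h1, h2⟩ := hp
  refine ⟨a * max C₁ C₂, by positivity, a / u, fun x y hxy => ?_, fun x => ?_⟩
  · have hL := one_le_log_exp_one_add (r := 1 / ‖x - y‖) (by positivity)
    have e : 1 / (p x / a) - 1 / (p y / a) = a * (1 / p x - 1 / p y) := by
      rw [one_div_div, one_div_div]; ring
    rw [e, abs_mul, abs_of_pos ha, mul_div_assoc]
    gcongr
    refine (h1 x (mem_univ _) y (mem_univ _) hxy).trans ?_
    gcongr
    exact le_max_left _ _
  · have hL := one_le_log_exp_one_add (r := ‖x‖) (by positivity)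
    have e : 1 / (p x / a) - a / u = a * (1 / p x - 1 / u) := by
      rw [one_div_div]; ring
    rw [e, abs_mul, abs_of_pos ha, mul_div_assoc]
    gcongr
    refine (h2 x (mem_univ _)).trans ?_
    gcongr
    exact le_max_right _ _

lemma abs_clamp_sub_clamp_le (l h a b : ℝ) :
    |max l (min h a) - max l (min h b)| ≤ |a - b| := by
  have h1 : |max l (min h a) - max l (min h b)| ≤ |min h a - min h b| := by
    simpa using abs_max_sub_max_le_max l (min h a) l (min h b)
  have h2 : |min h a - min h b| ≤ |a - b| := by
    simpa using abs_min_sub_min_le_max h a h b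
  exact h1.trans h2

lemma one_div_clamp {l h a : ℝ} (hl : 0 < l) (hh : 0 < h) (ha : 0 < a) :
    1 / min h (max l a) = max (1 / h) (min (1 / l) (1 / a)) := by
  rcases le_total l a with h1 | h1
  · rw [max_eq_right h1, min_eq_right (one_div_le_one_div_of_le hl h1)]
    rcases le_total h a with h2 | h2
    · rw [min_eq_left h2, max_eq_left (one_div_le_one_div_of_le hh h2)]
    · rw [min_eq_right h2, max_eq_right (one_div_le_one_div_of_le ha h2)]
  · rw [max_eq_left h1, min_eq_left (one_div_le_one_div_of_le ha h1)]
    rcases le_total h l with h2 | h2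
    · rw [min_eq_left h2, max_eq_left (one_div_le_one_div_of_le hh h2)]
    · rw [min_eq_right h2, max_eq_right (one_div_le_one_div_of_le hl h2)]

/-- Boundedness of the maximal function for log-Hölder exponents, in modular form. -/
theorem LogHolder.exists_lintegral_dyMax_le {n : ℕ} (hn : 1 ≤ n) {p : Rn n → ℝ}
    (hlog : LogHolder n p) (hp : Measurable p) (hp0 : ∀ x, 0 < p x) {pm P : ℝ} (hpm : 1 < pm)
    (hpP : pm ≤ P) (hple : ∀ᵐ x, pm ≤ p x) (hpge : ∀ᵐ x, p x ≤ P) :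
    ∃ C : ℝ≥0∞, C ≠ ⊤ ∧ ∀ f : Rn n → ℝ≥0∞, Measurable f → ∫⁻ y, f y ^ p y ≤ 1 →
      ∫⁻ x, dyMax n f x ^ p x ≤ C := by
  obtain ⟨c, hc, u, h1, h2⟩ := hlog
  have hpm0 : 0 < pm := by linarith
  have hP0 : 0 < P := by linarith
  set q : Rn n → ℝ := fun x => min P (max pm (p x)) / pm with hq
  set v : ℝ := max (1 / P) (min (1 / pm) u) with hv
  have hv0 : 0 < v := lt_max_of_lt_left (by positivity)
  have hinv : ∀ x, 1 / q x = pm * max (1 / P) (min (1 / pm) (1 / p x)) := by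
    intro x
    rw [hq, one_div_div, ← one_div_clamp hpm0 hP0 (hp0 x)]
    ring
  have hvu : 1 / (1 / (pm * v)) = pm * v := one_div_one_div _
  have hqp : ∀ᵐ x, pm * q x = p x := by
    filter_upwards [hple, hpge] with x hx1 hx2
    rw [hq]
    simp only
    rw [max_eq_right hx1, min_eq_right hx2, mul_div_cancel₀ _ hpm0.ne']
  have hqm : Measurable q := (measurable_const.min (measurable_const.max hp)).div_const _
  have hq1 : ∀ x, 1 ≤ q x := fun x => by
    rw [hq, le_div_iff₀ hpm0, one_mul]
    exact le_min hpP (le_max_left _ _)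
  have hqQ : ∀ x, q x ≤ P / pm := fun x => by
    simp only [hq]
    gcongr
    exact min_le_left _ _
  have hv1 : 1 ≤ 1 / (pm * v) := by
    rw [le_div_iff₀ (by positivity), one_mul]
    have : v ≤ 1 / pm := max_le (one_div_le_one_div_of_le hpm0 hpP) (min_le_left _ _)
    calc pm * v ≤ pm * (1 / pm) := by gcongr
      _ = 1 := by field_simp
  have hvQ : 1 / (pm * v) ≤ P / pm := by
    rw [one_div, mul_inv, div_eq_inv_mul]
    gcongr
    rw [inv_le_comm₀ hv0 hP0, ← one_div]
    exact le_max_left _ _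
  have hloc : ∀ x y, x ≠ y →
      |1 / q x - 1 / q y| ≤ pm * c / Real.log (Real.exp 1 + 1 / ‖x - y‖) := fun x y hxy => by
    have hL := one_le_log_exp_one_add (r := 1 / ‖x - y‖) (by positivity)
    rw [hinv, hinv, ← mul_sub, abs_mul, abs_of_pos hpm0, mul_div_assoc]
    gcongr
    exact (abs_clamp_sub_clamp_le _ _ _ _).trans (h1 x y hxy)
  have hinf : ∀ x, |1 / q x - 1 / (1 / (pm * v))| ≤ pm * c / Real.log (Real.exp 1 + ‖x‖) :=
    fun x => by
    rw [hinv, hvu, ← mul_sub, abs_mul, abs_of_pos hpm0, mul_div_assoc]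
    gcongr
    exact (abs_clamp_sub_clamp_le _ _ _ _).trans (h2 x)
  obtain ⟨C, hC, h⟩ := exists_lintegral_dyMax_varExp_le hn hqm hq1 hqQ (by positivity) hpm hv1 hvQ
    hloc hinf
  refine ⟨C, hC, fun f hf hf_le => ?_⟩
  have e1 : ∫⁻ y, f y ^ p y = ∫⁻ y, f y ^ (pm * q y) :=
    lintegral_congr_ae (by filter_upwards [hqp] with x hx; rw [hx])
  have e2 : ∫⁻ y, dyMax n f y ^ p y = ∫⁻ y, dyMax n f y ^ (pm * q y) :=
    lintegral_congr_ae (by filter_upwards [hqp] with x hx; rw [hx])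
  rw [e2]
  exact h f hf (e1 ▸ hf_le)

lemma rieszPot_le_lintegral {n : ℕ} {β : ℝ} (hβ : β < n) {h : Rn n → ℝ≥0∞} (hh : Measurable h)
    (x : Rn n) :
    rieszPot n β h x ≤ ENNReal.ofReal (n - β) *
      ∫⁻ s in Ioi (0:ℝ), ENNReal.ofReal (s ^ (β - n - 1)) * ∫⁻ y in Metric.closedBall x s, h y := by
  have hnβ : 0 < n - β := by linarith
  set φ : Rn n × ℝ → ℝ≥0∞ := {z : Rn n × ℝ | dist z.1 x ≤ z.2}.indicator
    (fun z => ENNReal.ofReal (z.2 ^ (β - n - 1)) * h z.1) with hφ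
  have hS : MeasurableSet {z : Rn n × ℝ | dist z.1 x ≤ z.2} :=
    measurableSet_le (by fun_prop) measurable_snd
  have hφm : Measurable φ := by
    refine Measurable.indicator (Measurable.mul ?_ (hh.comp measurable_fst)) hS
    fun_prop
  calc rieszPot n β h x
      ≤ ∫⁻ y, ENNReal.ofReal (n - β) * ∫⁻ s in Ioi (0:ℝ), φ (y, s) := by
        refine lintegral_mono fun y => ?_
        rcases eq_or_ne x y with rfl | hxy
        · rw [sub_self, norm_zero, Real.zero_rpow (by linarith), ENNReal.ofReal_zero, zero_mul]
          exact zero_le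
        have hd : 0 < ‖x - y‖ := norm_pos_iff.2 (sub_ne_zero.2 hxy)
        calc ENNReal.ofReal (‖x - y‖ ^ (β - n)) * h y
            = ENNReal.ofReal (n - β) * ((∫⁻ s in Ioi ‖x - y‖, ENNReal.ofReal (s ^ (β - n - 1)))
                * h y) := by
              have e := lintegral_Ioi_rpow hnβ hd
              rw [neg_sub] at e
              rw [e, ← mul_assoc, ← ENNReal.ofReal_mul hnβ.le, mul_div_cancel₀ _ hnβ.ne']
          _ = ENNReal.ofReal (n - β) * ∫⁻ s in Ioi ‖x - y‖, ENNReal.ofReal (s ^ (β - n - 1)) * h y := by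
              rw [lintegral_mul_const _ (by fun_prop)]
          _ = ENNReal.ofReal (n - β) * ∫⁻ s in Ioi ‖x - y‖, φ (y, s) := by
              congr 1
              refine setLIntegral_congr_fun measurableSet_Ioi fun s hs => ?_
              have : (y, s) ∈ {z : Rn n × ℝ | dist z.1 x ≤ z.2} := by
                change dist y x ≤ s
                rw [dist_comm, dist_eq_norm]
                exact le_of_lt hs
              rw [hφ, indicator_of_mem this]
          _ ≤ _ := mul_le_mul' le_rfl (lintegral_mono_set (Ioi_subset_Ioi hd.le))
    _ = ENNReal.ofReal (n - β) * ∫⁻ s in Ioi (0:ℝ), ∫⁻ y, φ (y, s) := by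
        rw [lintegral_const_mul' _ _ ENNReal.ofReal_ne_top]
        congr 1
        exact lintegral_lintegral_swap hφm.aemeasurable
    _ = _ := by
        congr 2
        ext s
        rw [← lintegral_const_mul' _ _ ENNReal.ofReal_ne_top, ← lintegral_indicator measurableSet_closedBall]
        rfl

lemma lintegral_closedBall_le_rpow {n : ℕ} {r : ℝ} (hr : 1 < r) {h : Rn n → ℝ≥0∞}
    (hh : Measurable h) (hf_le : ∫⁻ y, h y ^ r ≤ 1) (x : Rn n) {s : ℝ} (hs : 0 < s) :
    ∫⁻ y in Metric.closedBall x s, h y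
      ≤ volume (Metric.ball (0 : Rn n) 1) ^ (1 - 1 / r) * ENNReal.ofReal (s ^ (n - n / r)) := by
  have hr0 : 0 < r := by linarith
  have hr1 : 1 / r ≤ 1 := by rw [div_le_one hr0]; exact hr.le
  have hconj := Real.HolderConjugate.conjExponent hr
  have hH := ENNReal.lintegral_mul_le_Lp_mul_Lq (volume.restrict (Metric.closedBall x s)) hconj
    hh.aemeasurable (aemeasurable_const (b := (1:ℝ≥0∞)))
  have e : 1 / r.conjExponent = 1 - 1 / r := by
    have := hconj.one_div_add_one_div
    simp only [one_div] at this ⊢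
    linarith
  simp only [Pi.mul_apply, mul_one, ENNReal.one_rpow, e, lintegral_one, Measure.restrict_apply_univ] at hH
  refine hH.trans ?_
  calc _ ≤ 1 ^ (1 / r) * volume (Metric.closedBall x s) ^ (1 - 1 / r) := by
        gcongr
        exact (setLIntegral_le_lintegral _ _).trans hf_le
    _ = _ := by
        rw [ENNReal.one_rpow, one_mul, volume_closedBall_Rn n x hs.le,
          ENNReal.mul_rpow_of_nonneg _ _ (by linarith), mul_comm,
          ENNReal.ofReal_rpow_of_nonneg (by positivity) (by linarith), ← Real.rpow_natCast,
          ← Real.rpow_mul hs.le]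
        congr 3
        ring

/-- Hedberg's inequality. -/
lemma exists_rieszPot_le_dyMax_rpow {n : ℕ} {β r : ℝ} (hn : 1 ≤ n) (hβ : 0 < β) (hr : 1 < r)
    (hβr : β * r < n) :
    ∃ C : ℝ, 0 < C ∧ ∀ h : Rn n → ℝ≥0∞, Measurable h → ∫⁻ y, h y ^ r ≤ 1 → ∀ x,
      rieszPot n β h x ≤ ENNReal.ofReal C * dyMax n h x ^ (1 - β * r / n) := by
  have hn0 : (0:ℝ) < n := by exact_mod_cast hn
  have hr0 : 0 < r := by linarith
  have hβn : β < n := by nlinarith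
  have hδ : 0 < n / r - β := by
    rw [sub_pos, lt_div_iff₀ hr0]; exact hβr
  have hθ : 0 < 1 - β * r / n := by
    rw [sub_pos, div_lt_one hn0]; exact hβr
  set v := volume (Metric.ball (0 : Rn n) 1) with hv
  have hvt : v ≠ ⊤ := measure_ball_lt_top.ne
  have hr1 : 0 ≤ 1 - 1 / r := by
    rw [sub_nonneg, div_le_one hr0]; exact hr.le
  have hvr : v ^ (1 - 1 / r) ≠ ⊤ := ENNReal.rpow_ne_top_of_nonneg hr1 hvt
  set A : ℝ≥0∞ := ENNReal.ofReal (n - β) * (ENNReal.ofReal (2 ^ n) * v * ENNReal.ofReal (1 / β)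
    + v ^ (1 - 1 / r) * ENNReal.ofReal (1 / (n / r - β))) with hA
  have hAt : A ≠ ⊤ := by rw [hA]; finiteness
  refine ⟨A.toReal + 1, by positivity, fun h hh hf_le x => ?_⟩
  have hAle : A ≤ ENNReal.ofReal (A.toReal + 1) := by
    rw [← ENNReal.ofReal_toReal hAt]
    exact ENNReal.ofReal_le_ofReal (by simp)
  refine le_trans ?_ (mul_le_mul' hAle le_rfl)
  have hmain := rieszPot_le_lintegral hβn hh x
  have hball : ∀ s ∈ Ioi (0:ℝ), ∫⁻ y in Metric.closedBall x s, h y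
      ≤ ENNReal.ofReal (2 ^ n) * v * dyMax n h x * ENNReal.ofReal (s ^ n) := by
    intro s hs
    refine (lintegral_closedBall_le_dyMax h x hs).trans (le_of_eq ?_)
    rw [mul_pow, ENNReal.ofReal_mul (by positivity)]
    ring
  rcases eq_or_ne (dyMax n h x) 0 with h0 | h0
  · refine hmain.trans ?_
    have e : ∫⁻ s in Ioi (0:ℝ), ENNReal.ofReal (s ^ (β - n - 1))
        * ∫⁻ y in Metric.closedBall x s, h y = ∫⁻ s in Ioi (0:ℝ), 0 := by
      refine setLIntegral_congr_fun measurableSet_Ioi fun s hs => ?_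
      have := hball s hs
      rw [h0, mul_zero, zero_mul] at this
      rw [le_antisymm this zero_le, mul_zero]
    rw [e]
    simp
  rcases eq_or_ne (dyMax n h x) ⊤ with ht | ht
  · rw [ht, ENNReal.top_rpow_of_pos hθ, ENNReal.mul_top]
    · exact le_top
    · have hv0 : v ≠ 0 := (Metric.measure_ball_pos volume _ one_pos).ne'
      have h1 : ENNReal.ofReal (n - β) ≠ 0 := by simpa using hβn
      have h2 : ENNReal.ofReal (1 / β) ≠ 0 := by simpa using hβ
      have h3 : ENNReal.ofReal ((2:ℝ) ^ n) ≠ 0 := by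
        rw [Ne, ENNReal.ofReal_eq_zero, not_le]; positivity
      exact mul_ne_zero h1 (add_eq_zero.not.2 fun h4 => mul_ne_zero (mul_ne_zero h3 hv0) h2 h4.1)
  obtain ⟨a, ha, hxa⟩ : ∃ a : ℝ, 0 < a ∧ dyMax n h x = ENNReal.ofReal a :=
    ⟨(dyMax n h x).toReal, ENNReal.toReal_pos h0 ht, (ENNReal.ofReal_toReal ht).symm⟩
  rw [hxa] at hball ⊢
  set S : ℝ := a ^ (-(r / n)) with hS
  have hS0 : 0 < S := by positivity
  have hnear : ∫⁻ s in Ioc 0 S, ENNReal.ofReal (s ^ (β - n - 1)) * ∫⁻ y in Metric.closedBall x s, h y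
      ≤ ENNReal.ofReal (2 ^ n) * v * ENNReal.ofReal (1 / β) * ENNReal.ofReal (a ^ (1 - β * r / n)) := by
    calc _ ≤ ∫⁻ s in Ioc 0 S, ENNReal.ofReal (2 ^ n) * v * ENNReal.ofReal a
            * ENNReal.ofReal (s ^ (β - 1)) := by
          refine setLIntegral_mono' measurableSet_Ioc fun s hs => ?_
          have hs0 : 0 < s := hs.1
          refine (mul_le_mul' le_rfl (hball s hs0)).trans (le_of_eq ?_)
          have e : s ^ (β - 1) = s ^ (β - n - 1) * s ^ n := by
            rw [← Real.rpow_natCast, ← Real.rpow_add hs0]; ring_nf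
          rw [e, ENNReal.ofReal_mul (by positivity)]
          ring
      _ = _ := by
          rw [lintegral_const_mul' _ _ (by finiteness), lintegral_Ioc_rpow hβ hS0.le, mul_assoc,
            mul_assoc _ (ENNReal.ofReal (1 / β)), ← ENNReal.ofReal_mul ha.le,
            ← ENNReal.ofReal_mul (by positivity)]
          congr 2
          have e : a ^ (1 - β * r / n) = a * S ^ β := by
            rw [hS, ← Real.rpow_mul ha.le]
            nth_rewrite 2 [← Real.rpow_one a]
            rw [← Real.rpow_add ha]
            congr 1; ring
          rw [e]; ring
  have hfar : ∫⁻ s in Ioi S, ENNReal.ofReal (s ^ (β - n - 1)) * ∫⁻ y in Metric.closedBall x s, h y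
      ≤ v ^ (1 - 1 / r) * ENNReal.ofReal (1 / (n / r - β)) * ENNReal.ofReal (a ^ (1 - β * r / n)) := by
    calc _ ≤ ∫⁻ s in Ioi S, v ^ (1 - 1 / r) * ENNReal.ofReal (s ^ (-(n / r - β) - 1)) := by
          refine setLIntegral_mono' measurableSet_Ioi fun s hs => ?_
          have hs0 : 0 < s := hS0.trans hs
          refine (mul_le_mul' le_rfl (lintegral_closedBall_le_rpow hr hh hf_le x hs0)).trans
            (le_of_eq ?_)
          have e : s ^ (-(n / r - β) - 1) = s ^ (β - n - 1) * s ^ (n - n / r) := by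
            rw [← Real.rpow_add hs0]; ring_nf
          rw [e, ENNReal.ofReal_mul (by positivity)]
          ring
      _ = _ := by
          rw [lintegral_const_mul' _ _ hvr, lintegral_Ioi_rpow hδ hS0, mul_assoc,
            ← ENNReal.ofReal_mul (by positivity)]
          congr 2
          have e : a ^ (1 - β * r / n) = S ^ (-(n / r - β)) := by
            rw [hS, ← Real.rpow_mul ha.le]
            congr 1; field_simp
          rw [e]; ring
  calc rieszPot n β h x
      ≤ ENNReal.ofReal (n - β) * ((∫⁻ s in Ioc 0 S, ENNReal.ofReal (s ^ (β - n - 1))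
          * ∫⁻ y in Metric.closedBall x s, h y) + ∫⁻ s in Ioi S, ENNReal.ofReal (s ^ (β - n - 1))
          * ∫⁻ y in Metric.closedBall x s, h y) := by
        refine hmain.trans (mul_le_mul' le_rfl ?_)
        rw [← Ioc_union_Ioi_eq_Ioi hS0.le]
        exact lintegral_union_le _ _ _
    _ ≤ ENNReal.ofReal (n - β) * (ENNReal.ofReal (2 ^ n) * v * ENNReal.ofReal (1 / β)
          * ENNReal.ofReal (a ^ (1 - β * r / n)) + v ^ (1 - 1 / r)
          * ENNReal.ofReal (1 / (n / r - β)) * ENNReal.ofReal (a ^ (1 - β * r / n))) := by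
        gcongr
    _ = _ := by
        rw [ENNReal.ofReal_rpow_of_pos ha, hA]
        ring

lemma lintegral_div_rpow_le_one {Ω : Type*} [MeasurableSpace Ω] {μ : Measure Ω} {p : Ω → ℝ}
    (hp : ∀ x, 0 ≤ p x) {f : Ω → ℝ≥0∞} {d : ℝ≥0∞} (hd : luxNorm μ p f < d) :
    ∫⁻ x, (f x / d) ^ p x ∂μ ≤ 1 := by
  obtain ⟨lam, ⟨-, hlam⟩, hlt⟩ := sInf_lt_iff.1 hd
  refine le_trans (lintegral_mono fun x => ?_) hlam
  exact ENNReal.rpow_le_rpow (ENNReal.div_le_div_left hlt.le _) (hp x)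

lemma luxNorm_le_of_le_mul_rpow {Ω : Type*} [MeasurableSpace Ω] {μ : Measure Ω} {p : Ω → ℝ} {k : ℝ}
    (hp : ∀ x, 1 ≤ p x) {T M : Ω → ℝ≥0∞} {A : ℝ} (hA : 0 < A) {C d : ℝ≥0∞} (hC : C ≠ ⊤)
    (hd0 : d ≠ 0) (hd : d ≠ ⊤) (hT : ∀ x, T x ≤ ENNReal.ofReal A * d * M x ^ (1 / k))
    (hM : ∫⁻ x, M x ^ (p x / k) ∂μ ≤ C) :
    luxNorm μ p T ≤ ENNReal.ofReal (A * (1 + C.toReal)) * d := by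
  have hC0 : 0 ≤ C.toReal := ENNReal.toReal_nonneg
  have hA0 : ENNReal.ofReal A ≠ 0 := by simpa using hA
  set B : ℝ≥0∞ := 1 + C with hB
  have hBt : B ≠ ⊤ := by finiteness
  have hB1 : 1 ≤ B := le_self_add
  have hB0 : B ≠ 0 := (zero_lt_one.trans_le hB1).ne'
  have hAB : ENNReal.ofReal (A * (1 + C.toReal)) = ENNReal.ofReal A * B := by
    rw [ENNReal.ofReal_mul hA.le, ENNReal.ofReal_add zero_le_one hC0, ENNReal.ofReal_one,
      ENNReal.ofReal_toReal hC]
  rw [hAB]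
  have hAd0 : ENNReal.ofReal A * d ≠ 0 := mul_ne_zero hA0 hd0
  have hAdt : ENNReal.ofReal A * d ≠ ⊤ := by finiteness
  refine sInf_le ⟨pos_iff_ne_zero.2 (mul_ne_zero (mul_ne_zero hA0 hB0) hd0), ?_⟩
  calc ∫⁻ x, (T x / (ENNReal.ofReal A * B * d)) ^ p x ∂μ
      ≤ ∫⁻ x, B⁻¹ * M x ^ (p x / k) ∂μ := by
        refine lintegral_mono fun x => ?_
        have hpx : 0 < p x := by linarith [hp x]
        have h1 : T x / (ENNReal.ofReal A * B * d) ≤ B⁻¹ * M x ^ (1 / k) := by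
          refine ENNReal.div_le_of_le_mul ((hT x).trans (le_of_eq ?_))
          calc ENNReal.ofReal A * d * M x ^ (1 / k)
              = (B⁻¹ * B) * (ENNReal.ofReal A * d * M x ^ (1 / k)) := by
                rw [ENNReal.inv_mul_cancel hB0 hBt, one_mul]
            _ = _ := by ring
        calc (T x / (ENNReal.ofReal A * B * d)) ^ p x
            ≤ (B⁻¹ * M x ^ (1 / k)) ^ p x := ENNReal.rpow_le_rpow h1 hpx.le
          _ = B⁻¹ ^ p x * M x ^ (p x / k) := by
              rw [ENNReal.mul_rpow_of_nonneg _ _ hpx.le, ← ENNReal.rpow_mul]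
              ring_nf
          _ ≤ B⁻¹ * M x ^ (p x / k) := by
              gcongr
              exact ENNReal.rpow_le_self_of_le_one (ENNReal.inv_le_one.2 hB1) (hp x)
    _ = B⁻¹ * ∫⁻ x, M x ^ (p x / k) ∂μ := lintegral_const_mul' _ _ (ENNReal.inv_ne_top.2 hB0)
    _ ≤ B⁻¹ * B := by
        gcongr
        exact hM.trans le_add_self
    _ = 1 := ENNReal.inv_mul_cancel hB0 hBt

lemma rieszPot_eq_mul_div {n : ℕ} (β : ℝ) (f : Rn n → ℝ≥0∞) {d : ℝ≥0∞} (hd0 : d ≠ 0) (hd : d ≠ ⊤)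
    (x : Rn n) : rieszPot n β f x = d * rieszPot n β (fun y => f y / d) x := by
  unfold rieszPot
  rw [← lintegral_const_mul' _ _ hd]
  congr 1
  ext y
  rw [mul_left_comm, ENNReal.mul_div_cancel hd0 hd]

/-- Control of the external force term (γ = 0) in mixed variable Lebesgue spaces. -/
theorem stmt7 (n b : ℕ) (hn : 1 ≤ n) (hb : 1 ≤ b) (α : ℝ) (hα : 1/2 < α ∧ α ≤ 1)
    (h2α : 2 * α < n) (hnb : 2 * α * ((b:ℝ) + 1) < (n:ℝ) * b)
    (p : Rn n → ℝ) (hplog : IsPLog univ p)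
    (hpminus : ∃ pm : ℝ, (b:ℝ) + 1 < pm ∧ ∀ᵐ x ∂(volume : Measure (Rn n)), pm ≤ p x)
    (hpplus : ∃ P : ℝ, (∀ᵐ x ∂(volume : Measure (Rn n)), p x ≤ P) ∧
      2 * α * P < (n:ℝ) * ((b:ℝ) + 1)) :
    ∃ C > (0:ℝ), ∀ F : ℝ → Rn n → ℝ, Measurable (Function.uncurry F) →
      mixedN n p ((n:ℝ) * b / (2 * α))
        (fun t x => ∫ s in Ioc (0:ℝ) t, conv n (gKer n α (t - s)) (F s) x)
      ≤ ENNReal.ofReal C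
        * mixedN n (fun x => p x / ((b:ℝ) + 1)) ((n:ℝ) * b / (((b:ℝ) + 1) * (2 * α))) F := by
  obtain ⟨hα0, hα1⟩ := hα
  obtain ⟨pm, hpm, hpmle⟩ := hpminus
  obtain ⟨P, hPle, -⟩ := hpplus
  obtain ⟨hpmeas, hp1, -⟩ := id hplog
  have hp1 : ∀ x, 1 ≤ p x := fun x => hp1 x (mem_univ _)
  have hb0 : (1:ℝ) ≤ b := by exact_mod_cast hb
  have hn0 : (0:ℝ) < n := by exact_mod_cast hn
  have hpmP : pm ≤ P := by
    obtain ⟨x, hx1, hx2⟩ := (hpmle.and hPle).exists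
    exact hx1.trans hx2
  set k : ℝ := (b:ℝ) + 1 with hk
  have hk0 : 0 < k := by positivity
  set r : ℝ := (n:ℝ) * b / (k * (2 * α)) with hr
  have hr1 : 1 < r := by
    rw [hr, lt_div_iff₀ (by positivity)]; linarith
  have hkr : (n:ℝ) * b / (2 * α) = k * r := by
    rw [hr]; field_simp
  have hexp : 2 * α * r / n = 1 - 1 / k := by
    have : (b:ℝ) = k - 1 := by rw [hk]; ring
    rw [hr, this]; field_simp
  have hθ : 1 - 2 * α * r / n = 1 / k := by rw [hexp]; ring
  have hβr : 2 * α * r < n := by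
    have : 2 * α * r / n < 1 := by rw [hexp]; linarith [one_div_pos.2 hk0]
    rwa [div_lt_one hn0] at this
  obtain ⟨K, hK, hdom⟩ := exists_timeSup_duhamel_le hn (by linarith) hα1 h2α
  obtain ⟨A, hA, hhed⟩ := exists_rieszPot_le_dyMax_rpow hn (by linarith : 0 < 2 * α) hr1 hβr
  obtain ⟨C₁, hC₁, hmax₁⟩ := (hplog.logHolder_div hk0).exists_lintegral_dyMax_le hn
    (hpmeas.div_const k) (fun x => div_pos (by linarith [hp1 x]) hk0) (pm := pm / k) (P := P / k)
    (by rwa [lt_div_iff₀ hk0, one_mul]) (by gcongr)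
    (by filter_upwards [hpmle] with x hx; gcongr) (by filter_upwards [hPle] with x hx; gcongr)
  obtain ⟨C₂, hC₂, hmax₂⟩ := exists_lintegral_dyMax_rpow_le hn hr1
  set C : ℝ := K * A * (1 + C₁.toReal) + K * A * (1 + C₂.toReal) with hC
  have hC₁0 : 0 ≤ C₁.toReal := ENNReal.toReal_nonneg
  have hC₂0 : 0 ≤ C₂.toReal := ENNReal.toReal_nonneg
  have hCpos : 0 < C := by positivity
  refine ⟨C, hCpos, fun F hF => ?_⟩
  set f := timeSup n F with hf
  have hfm : Measurable f := measurable_timeSup hF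
  set u := timeSup n (fun t x => ∫ s in Ioc (0:ℝ) t, conv n (gKer n α (t - s)) (F s) x) with hu
  have hbound : ∀ d, mixedN n (fun x => p x / k) r F < d → d ≠ ⊤ →
      mixedN n p (k * r) (fun t x => ∫ s in Ioc (0:ℝ) t, conv n (gKer n α (t - s)) (F s) x)
        ≤ ENNReal.ofReal C * d := by
    intro d hd hdt
    have hd0 : d ≠ 0 := (zero_le.trans_lt hd).ne'
    have hh₁ : ∫⁻ x, (f x / d) ^ (p x / k) ≤ 1 := lintegral_div_rpow_le_one
      (fun x => div_nonneg (by linarith [hp1 x]) hk0.le) ((le_max_left _ _).trans_lt hd)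
    have hh₂ : ∫⁻ x, (f x / d) ^ r ≤ 1 := lintegral_div_rpow_le_one (p := fun _ => r)
      (fun x => by linarith) ((le_max_right _ _).trans_lt hd)
    have hhm : Measurable (fun x => f x / d) := hfm.div_const d
    have hT : ∀ x, u x ≤ ENNReal.ofReal (K * A) * d * dyMax n (fun x => f x / d) x ^ (1 / k) := by
      intro x
      calc u x ≤ ENNReal.ofReal K * (d * rieszPot n (2 * α) (fun x => f x / d) x) := by
            rw [← rieszPot_eq_mul_div _ _ hd0 hdt]; exact hdom F hF x
        _ ≤ ENNReal.ofReal K * (d * (ENNReal.ofReal A * dyMax n (fun x => f x / d) x ^ (1 / k))) := by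
            rw [← hθ]
            gcongr
            exact hhed _ hhm hh₂ x
        _ = _ := by rw [ENNReal.ofReal_mul hK.le]; ring
    refine max_le ?_ ?_
    · refine (luxNorm_le_of_le_mul_rpow hp1 (mul_pos hK hA) hC₁ hd0 hdt hT
        (hmax₁ _ hhm hh₁)).trans ?_
      gcongr
      rw [hC]
      exact le_add_of_nonneg_right (by positivity)
    · refine (luxNorm_le_of_le_mul_rpow (p := fun _ => k * r) (C := C₂) (fun _ => by nlinarith)
        (mul_pos hK hA) hC₂ hd0 hdt hT ?_).trans ?_
      · rw [mul_div_cancel_left₀ _ hk0.ne']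
        exact (hmax₂ _ hhm).trans ((mul_le_mul' le_rfl hh₂).trans_eq (mul_one _))
      · gcongr
        rw [hC]
        exact le_add_of_nonneg_left (by positivity)
  rw [hkr, mul_comm (ENNReal.ofReal C), ← ENNReal.div_le_iff (by simpa using hCpos) ENNReal.ofReal_ne_top]
  refine le_of_forall_gt_imp_ge_of_dense fun d hd => ?_
  rcases eq_or_ne d ⊤ with rfl | hdt
  · exact le_top
  rw [ENNReal.div_le_iff (by simpa using hCpos) ENNReal.ofReal_ne_top, mul_comm d]
  exact hbound d hd hdt
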